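/- arXiv:1307.7438 — 2 statements merged into one kernel-verified Lean document; each statement's English description precedes it below -/
import Mathlib

section
/- Let β ∈ F̃ with q(β) < 0, and suppose β = γ_1 + ⋯ + γ_r with r ≥ 2 and all γ_t ∈ L^+ ∖ {0}. Then q(β) < q(γ_1) + ⋯ + q(γ_r). -/
open Polynomial Matrix BigOperators

namespace DS

noncomputable section

/-- The data of a collection of HTL normal forms `B⁽ⁱ⁾`, `i = 0,…,p`, on `ℂⁿ`:
block counts `m i`, pole orders `kk i`, block sizes `nn i j`, irregular parts
`q i j ∈ s²ℂ[s]` (pairwise distinct, degree ≤ kk i), residue blocks `R i j`,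
chosen annihilating eigenvalue lists `ξ i j`, and an identification of
`Σ j, Fin (nn i j)` with `Fin n` (the block decomposition of `ℂⁿ`). -/
structure Setup where
  p : ℕ
  n : ℕ
  hn : 0 < n
  m : Fin (p+1) → ℕ
  hm : ∀ i, 0 < m i
  kk : Fin (p+1) → ℕ
  hkk : ∀ i, 0 < kk i
  nn : ∀ i : Fin (p+1), Fin (m i) → ℕ
  q : ∀ i : Fin (p+1), Fin (m i) → Polynomial ℂ
  hq0 : ∀ i j, (q i j).coeff 0 = 0
  hq1 : ∀ i j, (q i j).coeff 1 = 0
  hqdeg : ∀ i j, (q i j).natDegree ≤ kk i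
  hqdist : ∀ i : Fin (p+1), ∀ j j' : Fin (m i), j ≠ j' → q i j ≠ q i j'
  e : ∀ i : Fin (p+1), Fin (m i) → ℕ
  he : ∀ i j, 0 < e i j
  xi : ∀ (i : Fin (p+1)) (j : Fin (m i)), Fin (e i j) → ℂ
  R : ∀ (i : Fin (p+1)) (j : Fin (m i)), Matrix (Fin (nn i j)) (Fin (nn i j)) ℂ
  hxi : ∀ i j, (((List.finRange (e i j)).map fun l => R i j - xi i j l • 1).prod) = 0
  emb : ∀ i : Fin (p+1), (Σ j : Fin (m i), Fin (nn i j)) ≃ Fin n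
  hreg : ∀ i : Fin (p+1), ¬ (1 < m i ∨ i = 0) → kk i = 1

/-- `i ∈ I_irr` : the indices of irregular singular points together with `0`. -/
def Iirr (S : Setup) (i : Fin (S.p+1)) : Prop := 1 < S.m i ∨ i = 0

instance (S : Setup) : DecidablePred (Iirr S) := fun i =>
  inferInstanceAs (Decidable (1 < S.m i ∨ i = 0))

/-- Vertices `[i,j]` for `i ∈ I_irr`. -/
abbrev Vb (S : Setup) := Σ i : {i : Fin (S.p+1) // Iirr S i}, Fin (S.m i.1)

/-- Vertices `[i,j,k]` for `0 ≤ i ≤ p`, `1 ≤ j ≤ m⁽ⁱ⁾`, `1 ≤ k ≤ e[i,j]-1`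
(the third component `κ` encodes `k = κ+1`). -/
abbrev Vr (S : Setup) := Σ i : Fin (S.p+1), Σ j : Fin (S.m i), Fin (S.e i j - 1)

/-- The vertex set `Q₀` of the quiver `Q`. -/
abbrev V (S : Setup) := Vb S ⊕ Vr S

/-- `d_i(j,j') = deg (q_j - q_j') - 2`. -/
def dcnt (S : Setup) (i : Fin (S.p+1)) (j j' : Fin (S.m i)) : ℕ :=
  (S.q i j - S.q i j').natDegree - 2

/-- The number of arrows of `Q` from a vertex `a` to a vertex `b`. -/
def arr (S : Setup) : V S → V S → ℕ
  | .inl ⟨i, j⟩, .inl ⟨i', j'⟩ =>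
      (if i.1 = 0 ∧ i'.1 ≠ 0 then 1 else 0) +
      (if h : i = i' then
        (if (j : ℕ) < (j' : ℕ) then dcnt S i.1 j (Fin.cast (by rw [h]) j') else 0)
       else 0)
  | .inl _, .inr _ => 0
  | .inr ⟨i, j, κ⟩, .inl ⟨i', j'⟩ =>
      (if i = i'.1 ∧ (j : ℕ) = (j' : ℕ) ∧ (κ : ℕ) = 0 then 1 else 0) +
      (if ¬ Iirr S i ∧ i'.1 = 0 ∧ (j : ℕ) = 0 ∧ (κ : ℕ) = 0 then 1 else 0)
  | .inr ⟨i, j, κ⟩, .inr ⟨i', j', κ'⟩ =>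
      if i = i' ∧ (j : ℕ) = (j' : ℕ) ∧ (κ : ℕ) = (κ' : ℕ) + 1 then 1 else 0

/-- The Euler form `⟨β,γ⟩` of the quiver `Q`. -/
def eform (S : Setup) (β γ : V S → ℤ) : ℤ :=
  (∑ a : V S, β a * γ a) - ∑ a : V S, ∑ b : V S, (arr S a b : ℤ) * β a * γ b

/-- The symmetrized bilinear form `(β,γ)`. -/
def bform (S : Setup) (β γ : V S → ℤ) : ℤ := eform S β γ + eform S γ β

/-- The quadratic form `q(β)`. -/
def qform (S : Setup) (β : V S → ℤ) : ℤ := eform S β β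

/-- `p(β) = 1 - q(β)`. -/
def pform (S : Setup) (β : V S → ℤ) : ℤ := 1 - qform S β

/-- The coordinate vector `ε_a`. -/
def eps (S : Setup) (a : V S) : V S → ℤ := fun b => if b = a then 1 else 0

/-- The fundamental reflection `s_a`. -/
def refl1 (S : Setup) (a : V S) (β : V S → ℤ) : V S → ℤ :=
  fun b => β b - bform S β (eps S a) * eps S a b

/-- Iterated fundamental reflections (a Weyl group element). -/
def reflList (S : Setup) (l : List (V S)) (β : V S → ℤ) : V S → ℤ :=
  l.foldr (refl1 S) β

/-- The support of a vector. -/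
def supp (S : Setup) (β : V S → ℤ) : Set (V S) := {a | β a ≠ 0}

/-- The support of `β` is connected in the underlying graph of `Q`. -/
def connSupp (S : Setup) (β : V S → ℤ) : Prop :=
  ∀ a ∈ supp S β, ∀ b ∈ supp S β,
    Relation.ReflTransGen
      (fun x y => (0 < arr S x y + arr S y x) ∧ x ∈ supp S β ∧ y ∈ supp S β) a b

/-- The fundamental set of the root system of `Q` (all vertices of `Q` are loop-free). -/
def fund (S : Setup) (β : V S → ℤ) : Prop :=
  β ≠ 0 ∧ (∀ a, 0 ≤ β a) ∧ connSupp S β ∧ ∀ a : V S, bform S β (eps S a) ≤ 0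

/-- Real roots of `Q`. -/
def isRealRoot (S : Setup) (β : V S → ℤ) : Prop :=
  ∃ (l : List (V S)) (a : V S), β = reflList S l (eps S a)

/-- Imaginary roots of `Q`. -/
def isImagRoot (S : Setup) (β : V S → ℤ) : Prop :=
  ∃ (l : List (V S)) (γ : V S → ℤ), (fund S γ ∨ fund S (-γ)) ∧ β = reflList S l γ

/-- Roots of `Q`. -/
def isRoot (S : Setup) (β : V S → ℤ) : Prop := isRealRoot S β ∨ isImagRoot S β

/-- Positive roots of `Q`. -/
def isPosRoot (S : Setup) (β : V S → ℤ) : Prop := isRoot S β ∧ ∀ a, 0 ≤ β a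

/-- The index `0` as an element of `I_irr`. -/
def i0 (S : Setup) : {i : Fin (S.p+1) // Iirr S i} := ⟨0, Or.inr rfl⟩

/-- The vertex `[0,j]`. -/
def v0 (S : Setup) (j : Fin (S.m 0)) : V S := Sum.inl ⟨i0 S, j⟩

/-- The vertex `[i,j]` for `i ∈ I_irr`. -/
def vI (S : Setup) (i : {i : Fin (S.p+1) // Iirr S i}) (j : Fin (S.m i.1)) : V S :=
  Sum.inl ⟨i, j⟩

/-- The lattice `L`: `Σ_j β_[0,j] = Σ_j β_[i,j]` for all `i ∈ I_irr ∖ {0}`. -/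
def inL (S : Setup) (β : V S → ℤ) : Prop :=
  ∀ i : {i : Fin (S.p+1) // Iirr S i}, i.1 ≠ 0 →
    (∑ j : Fin (S.m 0), β (v0 S j)) = ∑ j : Fin (S.m i.1), β (vI S i j)

/-- `L⁺ = L ∩ (ℤ≥0)^{Q₀}`. -/
def inLpos (S : Setup) (β : V S → ℤ) : Prop := inL S β ∧ ∀ a, 0 ≤ β a

/-- The dimension vector `α` (as natural numbers):
`α_[i,j] = n⁽ⁱ⁾_j`, `α_[i,j,k] = rank ∏_{l=1}^k (R⁽ⁱ⁾_j - ξ^{[i,j]}_l)`. -/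
noncomputable def alN (S : Setup) : V S → ℕ
  | .inl ⟨i, j⟩ => S.nn i.1 j
  | .inr ⟨i, j, κ⟩ =>
      ((((List.finRange (S.e i j)).take ((κ : ℕ) + 1)).map
          fun l => S.R i j - S.xi i j l • 1).prod).rank

/-- The dimension vector `α` as an integer vector. -/
noncomputable def alZ (S : Setup) : V S → ℤ := fun a => (alN S a : ℤ)

/-- The parameter `λ ∈ ℂ^{Q₀}`. -/
noncomputable def lam (S : Setup) : V S → ℂ
  | .inl ⟨i, j⟩ =>
      if h : i.1 = 0 then
        (- S.xi 0 (Fin.cast (by rw [h]) j) ⟨0, S.he 0 (Fin.cast (by rw [h]) j)⟩)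
          - ∑ i' ∈ Finset.univ.filter (fun i' : Fin (S.p+1) => ¬ Iirr S i'),
              S.xi i' ⟨0, S.hm i'⟩ ⟨0, S.he i' ⟨0, S.hm i'⟩⟩
      else - S.xi i.1 j ⟨0, S.he i.1 j⟩
  | .inr ⟨i, j, κ⟩ =>
      S.xi i j ⟨(κ : ℕ), by have := κ.2; omega⟩
        - S.xi i j ⟨(κ : ℕ) + 1, by have := κ.2; omega⟩

/-- Pairing `β · μ = Σ_a β_a μ_a` between `ℤ^{Q₀}` and `ℂ^{Q₀}`. -/
noncomputable def dotC (S : Setup) (β : V S → ℤ) (μ : V S → ℂ) : ℂ :=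
  ∑ a : V S, (β a : ℂ) * μ a

/-- `β ∈ R̃⁺_μ` : positive roots of `Q` lying in `L` with `β·μ = 0`. -/
def inRt (S : Setup) (μ : V S → ℂ) (β : V S → ℤ) : Prop :=
  isPosRoot S β ∧ inL S β ∧ dotC S β μ = 0

/-- `β ∈ ℕR̃⁺_μ` : finite sums (including `0`) of elements of `R̃⁺_μ`. -/
def inNRt (S : Setup) (μ : V S → ℂ) (β : V S → ℤ) : Prop :=
  ∃ (r : ℕ) (γ : Fin r → (V S → ℤ)), (∀ t, inRt S μ (γ t)) ∧ β = ∑ t, γ t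

/-- `β ∈ Σ̃_μ`. -/
def inSig (S : Setup) (μ : V S → ℂ) (β : V S → ℤ) : Prop :=
  inRt S μ β ∧ ∀ (r : ℕ), 2 ≤ r → ∀ γ : Fin r → (V S → ℤ),
    (∀ t, inRt S μ (γ t)) → β = ∑ t, γ t → (∑ t, pform S (γ t)) < pform S β

/-! ### The matrix side: truncated orbits.

An element `Σ_{j=1}^{k} A_j x^{-j}` of `𝔤_k*` is encoded as the polynomial matrix
`Σ_{j=1}^{k} A_j x^{k-j}` (of degree `< k`); the coadjoint `G_k`-action becomes
conjugation modulo `x^k` by polynomial matrices with invertible constant term. -/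

abbrev PMat (S : Setup) := Matrix (Fin S.n) (Fin S.n) (Polynomial ℂ)

/-- All entries have degree `< k`. -/
def degLT (S : Setup) (k : ℕ) (A : PMat S) : Prop :=
  ∀ a b, (A a b).degree < (k : ℕ)

/-- The HTL normal form `B⁽ⁱ⁾`, in the polynomial encoding. -/
noncomputable def Bmat (S : Setup) (i : Fin (S.p+1)) : PMat S :=
  Matrix.of fun a b =>
    if h : ((S.emb i).symm a).1 = ((S.emb i).symm b).1 then
      (if Fin.cast (by rw [h]) ((S.emb i).symm a).2 = ((S.emb i).symm b).2 then
          Polynomial.reflect (S.kk i) (S.q i ((S.emb i).symm b).1)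
        else 0)
        + Polynomial.C
            (S.R i ((S.emb i).symm b).1 (Fin.cast (by rw [h]) ((S.emb i).symm a).2)
              ((S.emb i).symm b).2)
          * Polynomial.X ^ (S.kk i - 1)
    else 0

/-- Membership in the truncated orbit `𝒪_{B⁽ⁱ⁾}`. -/
def inOrbit (S : Setup) (i : Fin (S.p+1)) (A : PMat S) : Prop :=
  degLT S (S.kk i) A ∧
  ∃ g : PMat S, IsUnit (g.map fun r => r.coeff 0) ∧
    ∀ a b, (Polynomial.X ^ (S.kk i) : Polynomial ℂ) ∣ (g * Bmat S i - A * g) a b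

/-- The residue matrix `A⁽ⁱ⁾₁`. -/
def resMat (S : Setup) (i : Fin (S.p+1)) (A : PMat S) : Matrix (Fin S.n) (Fin S.n) ℂ :=
  Matrix.of fun a b => (A a b).coeff (S.kk i - 1)

/-- `(A⁽ⁱ⁾)_{0≤i≤p} ∈ ∏ 𝒪_{B⁽ⁱ⁾}` with `Σ A⁽ⁱ⁾₁ = 0`. -/
def isDSElem (S : Setup) (A : ∀ _ : Fin (S.p+1), PMat S) : Prop :=
  (∀ i, inOrbit S i (A i)) ∧ (∑ i, resMat S i (A i)) = 0

/-- Irreducibility of the collection of all coefficient matrices `A⁽ⁱ⁾_j`. -/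
def irredTuple (S : Setup) (A : ∀ _ : Fin (S.p+1), PMat S) : Prop :=
  ∀ W : Submodule ℂ (Fin S.n → ℂ),
    (∀ (i : Fin (S.p+1)) (l : ℕ), ∀ v ∈ W,
        (Matrix.of fun a b => (A i a b).coeff l).mulVec v ∈ W) →
    W = ⊥ ∨ W = ⊤

/-! ### Representations of the double quiver -/

/-- A representation of the double quiver `Q̄` with dimension vector `β`:
`f a b ρ` is the matrix of `ψ_ρ : ℂ^{β a} → ℂ^{β b}` and `g a b ρ` the matrix of
`ψ_{ρ*} : ℂ^{β b} → ℂ^{β a}`, for the `ρ`-th arrow `a → b` of `Q`. -/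
structure Rep (S : Setup) (β : V S → ℕ) where
  f : ∀ a b : V S, Fin (arr S a b) → Matrix (Fin (β b)) (Fin (β a)) ℂ
  g : ∀ a b : V S, Fin (arr S a b) → Matrix (Fin (β a)) (Fin (β b)) ℂ

/-- The moment map at a vertex `c`. -/
noncomputable def moment (S : Setup) {β : V S → ℕ} (M : Rep S β) (c : V S) :
    Matrix (Fin (β c)) (Fin (β c)) ℂ :=
  (∑ a : V S, ∑ ρ : Fin (arr S a c), M.f a c ρ * M.g a c ρ)
    - ∑ b : V S, ∑ ρ : Fin (arr S c b), M.g c b ρ * M.f c b ρ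

/-- `M ∈ Rep(Q̄,β)_μ`. -/
def onMu (S : Setup) {β : V S → ℕ} (μ : V S → ℂ) (M : Rep S β) : Prop :=
  ∀ c : V S, moment S M c = μ c • (1 : Matrix (Fin (β c)) (Fin (β c)) ℂ)

/-- The block matrix `(ψ_{ρ^{[0,j]}_{[i,j']}})_{j,j'}` for `i ∈ I_irr ∖ {0}`. -/
noncomputable def crossMat (S : Setup) {β : V S → ℕ} (M : Rep S β)
    (i : {i : Fin (S.p+1) // Iirr S i}) :
    Matrix (Σ j' : Fin (S.m i.1), Fin (β (vI S i j'))) (Σ j : Fin (S.m 0), Fin (β (v0 S j))) ℂ :=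
  Matrix.of fun x y =>
    if h : 0 < arr S (v0 S y.1) (vI S i x.1) then
      M.f (v0 S y.1) (vI S i x.1) ⟨0, h⟩ x.2 y.2
    else 0

/-- All the block matrices `(ψ_{ρ^{[0,j]}_{[i,j']}})` for `i ∈ I_irr ∖ {0}` are invertible. -/
def crossBij (S : Setup) {β : V S → ℕ} (M : Rep S β) : Prop :=
  ∀ i : {i : Fin (S.p+1) // Iirr S i}, i.1 ≠ 0 →
    Function.Bijective ((crossMat S M i).mulVec)

/-- The combined map `(ψ_{ρ^{[i,1,1]}_{[0,j]}})_j : ℂ^{β [i,1,1]} → ⊕_j ℂ^{β [0,j]}`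
(for `i ∈ I_reg`). -/
noncomputable def regMatF (S : Setup) {β : V S → ℕ} (M : Rep S β)
    (i : Fin (S.p+1)) (j : Fin (S.m i)) (κ : Fin (S.e i j - 1)) :
    Matrix (Σ j' : Fin (S.m 0), Fin (β (v0 S j'))) (Fin (β (Sum.inr ⟨i, j, κ⟩))) ℂ :=
  Matrix.of fun x y =>
    if h : 0 < arr S (Sum.inr ⟨i, j, κ⟩) (v0 S x.1) then
      M.f (Sum.inr ⟨i, j, κ⟩) (v0 S x.1) ⟨0, h⟩ x.2 y
    else 0

/-- The combined map `(ψ_{(ρ^{[i,1,1]}_{[0,j]})*})_j : ⊕_j ℂ^{β [0,j]} → ℂ^{β [i,1,1]}`. -/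
noncomputable def regMatG (S : Setup) {β : V S → ℕ} (M : Rep S β)
    (i : Fin (S.p+1)) (j : Fin (S.m i)) (κ : Fin (S.e i j - 1)) :
    Matrix (Fin (β (Sum.inr ⟨i, j, κ⟩))) (Σ j' : Fin (S.m 0), Fin (β (v0 S j'))) ℂ :=
  Matrix.of fun y x =>
    if h : 0 < arr S (Sum.inr ⟨i, j, κ⟩) (v0 S x.1) then
      M.g (Sum.inr ⟨i, j, κ⟩) (v0 S x.1) ⟨0, h⟩ y x.2
    else 0

/-- `M ∈ Rep(Q̄,β)_μ^{dif}` (the open conditions). -/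
def difCond (S : Setup) {β : V S → ℕ} (M : Rep S β) : Prop :=
  crossBij S M ∧
  (∀ (i : Fin (S.p+1)), ¬ Iirr S i → ∀ (j : Fin (S.m i)) (κ : Fin (S.e i j - 1)),
      (κ : ℕ) = 0 →
      Function.Injective ((regMatF S M i j κ).mulVec) ∧
      Function.Surjective ((regMatG S M i j κ).mulVec)) ∧
  (∀ (i : Fin (S.p+1)) (j : Fin (S.m i)) (κ : Fin (S.e i j - 1)) (b : V S)
      (ρ : Fin (arr S (Sum.inr ⟨i, j, κ⟩) b)),
      (¬ Iirr S i ∧ (κ : ℕ) = 0) ∨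
      (Function.Injective ((M.f (Sum.inr ⟨i, j, κ⟩) b ρ).mulVec) ∧
       Function.Surjective ((M.g (Sum.inr ⟨i, j, κ⟩) b ρ).mulVec)))

/-- A family of subspaces forming a subrepresentation of `M`. -/
def isSubrep (S : Setup) {β : V S → ℕ} (M : Rep S β)
    (W : ∀ a : V S, Submodule ℂ (Fin (β a) → ℂ)) : Prop :=
  ∀ (a b : V S) (ρ : Fin (arr S a b)),
    (∀ v ∈ W a, (M.f a b ρ).mulVec v ∈ W b) ∧ (∀ v ∈ W b, (M.g a b ρ).mulVec v ∈ W a)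

/-- Irreducibility of a representation. -/
def irredRep (S : Setup) {β : V S → ℕ} (M : Rep S β) : Prop :=
  ∀ W, isSubrep S M W → (∀ a, W a = ⊥) ∨ (∀ a, W a = ⊤)

/-- A dimension vector is balanced if `Σ_j γ_[0,j] = Σ_j γ_[i,j]` for all `i ∈ I_irr∖{0}`. -/
def balanced (S : Setup) (γ : V S → ℕ) : Prop :=
  ∀ i : {i : Fin (S.p+1) // Iirr S i}, i.1 ≠ 0 →
    (∑ j : Fin (S.m 0), γ (v0 S j)) = ∑ j : Fin (S.m i.1), γ (vI S i j)

/-- Quasi-irreducibility: no nontrivial proper subrepresentation with balanced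
dimension vector. -/
def quasiIrred (S : Setup) {β : V S → ℕ} (M : Rep S β) : Prop :=
  ∀ W, isSubrep S M W → balanced S (fun a => Module.finrank ℂ (W a)) →
    (∀ a, W a = ⊥) ∨ (∀ a, W a = ⊤)

/-- Simultaneous conjugation of representations by `∏_a GL(β_a, ℂ)`. -/
def repConj (S : Setup) {β : V S → ℕ} (M N : Rep S β) : Prop :=
  ∃ g : ∀ a : V S, (Matrix (Fin (β a)) (Fin (β a)) ℂ)ˣ,
    (∀ a b ρ, N.f a b ρ = ((g b).val * M.f a b ρ) * ((g a)⁻¹).val) ∧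
    (∀ a b ρ, N.g a b ρ = ((g a).val * M.g a b ρ) * ((g b)⁻¹).val)

/-- Simultaneous conjugation of tuples by `GL(n, ℂ)`. -/
def tupConj (S : Setup) (A A' : ∀ _ : Fin (S.p+1), PMat S) : Prop :=
  ∃ g : (Matrix (Fin S.n) (Fin S.n) ℂ)ˣ,
    ∀ i, A' i = (g.val.map Polynomial.C) * A i * ((g⁻¹).val.map Polynomial.C)

/-- Carrier of the moduli space `ℳ*_{st}(𝐁)`. -/
abbrev MstC (S : Setup) := {A : ∀ _ : Fin (S.p+1), PMat S // isDSElem S A ∧ irredTuple S A}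

/-- The moduli space `ℳ*_{st}(𝐁)` of stable connections, identified with conjugacy
classes of irreducible elements of `∏ 𝒪_{B⁽ⁱ⁾}` with vanishing residue sum. -/
abbrev Mst (S : Setup) := Quot (fun A A' : MstC S => tupConj S A.1 A'.1)

abbrev DSC (S : Setup) := {A : ∀ _ : Fin (S.p+1), PMat S // isDSElem S A}

abbrev DSQ (S : Setup) := Quot (fun A A' : DSC S => tupConj S A.1 A'.1)

abbrev RepIrrC (S : Setup) (μ : V S → ℂ) :=
  {M : Rep S (alN S) // onMu S μ M ∧ irredRep S M}

/-- The quiver variety `𝔐^{reg}_μ(Q,α)`. -/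
abbrev Mreg (S : Setup) (μ : V S → ℂ) :=
  Quot (fun M N : RepIrrC S μ => repConj S M.1 N.1)

abbrev DifC (S : Setup) (μ : V S → ℂ) :=
  {M : Rep S (alN S) // onMu S μ M ∧ difCond S M}

abbrev DifQ (S : Setup) (μ : V S → ℂ) :=
  Quot (fun M N : DifC S μ => repConj S M.1 N.1)

abbrev QIC (S : Setup) (μ : V S → ℂ) :=
  {M : Rep S (alN S) // onMu S μ M ∧ quasiIrred S M ∧ crossBij S M}

abbrev QIQ (S : Setup) (μ : V S → ℂ) :=
  Quot (fun M N : QIC S μ => repConj S M.1 N.1)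

/-! ### `J`, `ε_𝐢`, and the equivalence relation `∼` -/

/-- `ε_𝐢 = Σ_{i ∈ I_irr} ε_{[i,j_i]}` for `𝐢 = ([i,j_i]) ∈ 𝒥`. -/
def epsJ (S : Setup) (I : ∀ i : Fin (S.p+1), Fin (S.m i)) : V S → ℤ
  | .inl ⟨i, j⟩ => if (j : ℕ) = (I i.1 : ℕ) then 1 else 0
  | .inr _ => 0

/-- The reflection `s_𝐢`. -/
def sJ (S : Setup) (I : ∀ i : Fin (S.p+1), Fin (S.m i)) (β : V S → ℤ) : V S → ℤ :=
  fun b => β b - bform S β (epsJ S I) * epsJ S I b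

/-- The quasi-fundamental set `F̃`. -/
def quasiFund (S : Setup) (β : V S → ℤ) : Prop :=
  inL S β ∧ (∀ a, 0 ≤ β a) ∧ β ≠ 0 ∧
  (∀ I : ∀ i : Fin (S.p+1), Fin (S.m i), bform S β (epsJ S I) ≤ 0) ∧
  (∀ (i : Fin (S.p+1)) (j : Fin (S.m i)) (κ : Fin (S.e i j - 1)),
      bform S β (eps S (Sum.inr ⟨i, j, κ⟩)) ≤ 0) ∧
  connSupp S β

/-- `μ_𝐢 = Σ_{i ∈ I_irr} μ_{[i,j_i]}`. -/
noncomputable def muJ (S : Setup) (I : ∀ i : Fin (S.p+1), Fin (S.m i)) (μ : V S → ℂ) : ℂ :=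
  ∑ i : {i : Fin (S.p+1) // Iirr S i}, μ (vI S i (I i.1))

/-- The transformed parameter `μ'` in the move `s_𝐢` on pairs. -/
noncomputable def muMove (S : Setup) (I : ∀ i : Fin (S.p+1), Fin (S.m i)) (μ : V S → ℂ) :
    V S → ℂ := fun a =>
  match a with
  | .inl ⟨i, j⟩ =>
      if i.1 = 0 ∧ (j : ℕ) = (I 0 : ℕ) then μ a - 2 * muJ S I μ else μ a
  | .inr ⟨i, j, κ⟩ =>
      if j = I i ∧ (κ : ℕ) = 0 then μ a + muJ S I μ else μ a

/-- The reflected parameter `r_a(μ)` for a vertex `a`. -/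
noncomputable def rvtx (S : Setup) (a : V S) (μ : V S → ℂ) : V S → ℂ :=
  fun b => μ b - ((bform S (eps S a) (eps S b) : ℤ) : ℂ) * μ a

/-- One move generating the relation `∼` on pairs `(β,μ)`. -/
def stepRel (S : Setup) :
    ((V S → ℤ) × (V S → ℂ)) → ((V S → ℤ) × (V S → ℂ)) → Prop := fun x y =>
  (∃ (i : Fin (S.p+1)) (j : Fin (S.m i)) (κ : Fin (S.e i j - 1)),
      x.2 (Sum.inr ⟨i, j, κ⟩) ≠ 0 ∧
      y = (refl1 S (Sum.inr ⟨i, j, κ⟩) x.1, rvtx S (Sum.inr ⟨i, j, κ⟩) x.2)) ∨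
  (∃ I : ∀ i : Fin (S.p+1), Fin (S.m i),
      muJ S I x.2 ≠ 0 ∧ y = (sJ S I x.1, muMove S I x.2))

/-- The smallest equivalence relation `∼` containing all the moves. -/
def pairEquiv (S : Setup) :
    ((V S → ℤ) × (V S → ℂ)) → ((V S → ℤ) × (V S → ℂ)) → Prop :=
  Relation.EqvGen (stepRel S)

/-- The vector `z^{(i₀)}` for `i₀ ∈ I_irr ∖ {0}`. -/
def zvec (S : Setup) (i' : Fin (S.p+1)) : V S → ℂ
  | .inl ⟨i, _⟩ => if i.1 = i' then 1 else if i.1 = 0 then -1 else 0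
  | .inr _ => 0

/-!
On `L` the cross edges into each level `i ≠ 0` contribute `-2 n n'` to `(x,y)`, where `n` and `n'`
are the common level sums of the two vectors. Hence `(x,y)` is the form of the graph without cross
edges, minus `2 (|I_irr| - 1) n n'`.

Let `x, y ∈ L⁺ ∖ {0}` have sum `β ∈ F̃`, and let `f = x / β` on the support of `β`. Kac's identity
writes the first part of `(x,y)` as `∑_a d_a β_a f_a (1 - f_a)`, with `d_a` the pairing of `β` with
`ε_a`, minus a Dirichlet energy of `f`. The conditions defining `F̃` give `d_a ≤ 0` on the legs and
`∑_i max_j d_[i,j] ≤ 2 (|I_irr| - 1) ∑_j β_[0,j]`. With `∑_j β_[i,j] f_[i,j] (1 - f_[i,j])` expanded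
as a variance, the cross term absorbs the rest, so `(x,y)` is at most minus a sum of Dirichlet
energies.

If `(x,y) ≥ 0`, these energies vanish. Then `f` is constant on each level: where no energy of the
level itself forces this, convexity of `β` along the leg of `[i,j]` provides a neighbour of `[i,j]`
in the support, and the edges within a level come from an ultrametric. Connectedness makes `f`
constant on the whole support, so `x` and `y` are proportional and `(x,y)` is a positive multiple of
`q(β) < 0`, a contradiction. Hence `(x,y) < 0`, and the theorem follows by summing
`(γ_t, β - γ_t) < 0` over `t`.
-/

section DirichletEnergy

variable {A R K : Type*} [Fintype A]

/-- The Dirichlet energy of a function `f` on a finite graph with edge weights `w` and vertex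
weights `b`. The sum runs over ordered pairs, so every edge counts twice. -/
def dirichletEnergy [CommRing R] (w : A → A → R) (b f : A → R) : R :=
  ∑ a, ∑ c, w a c * (b a * b c) * (f a - f c) ^ 2

theorem two_mul_sum_mul_one_sub [CommRing R] {w : A → A → R} (hw : ∀ a c, w a c = w c a)
    (b f : A → R) :
    2 * ∑ a, (∑ c, w a c * (b c * f c)) * (b a * (1 - f a)) =
      2 * ∑ a, (∑ c, w a c * b c) * (b a * (f a * (1 - f a))) + dirichletEnergy w b f := by
  have symmetrize (g : A → A → R) : 2 * ∑ a, ∑ c, g a c = ∑ a, ∑ c, (g a c + g c a) := by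
    simp only [Finset.sum_add_distrib]
    rw [Finset.sum_comm (f := fun a c => g c a), two_mul]
  simp only [Finset.sum_mul, symmetrize, dirichletEnergy, ← Finset.sum_add_distrib]
  refine Finset.sum_congr rfl fun a _ => Finset.sum_congr rfl fun c _ => ?_
  rw [hw c a]
  ring

variable [Field K] [LinearOrder K] [IsStrictOrderedRing K] {w : A → A → K} {b : A → K}

theorem dirichletEnergy_nonneg (hw : ∀ a c, 0 ≤ w a c) (hb : ∀ a, 0 ≤ b a) (f : A → K) :
    0 ≤ dirichletEnergy w b f :=
  Finset.sum_nonneg fun a _ => Finset.sum_nonneg fun c _ =>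
    mul_nonneg (mul_nonneg (hw a c) (mul_nonneg (hb a) (hb c))) (sq_nonneg _)

theorem eq_of_dirichletEnergy_eq_zero (hw : ∀ a c, 0 ≤ w a c) (hb : ∀ a, 0 ≤ b a) {f : A → K}
    (h : dirichletEnergy w b f = 0) {a c : A} (hac : 0 < w a c) (ha : 0 < b a) (hc : 0 < b c) :
    f a = f c := by
  have term_nonneg (a c : A) : 0 ≤ w a c * (b a * b c) * (f a - f c) ^ 2 :=
    mul_nonneg (mul_nonneg (hw a c) (mul_nonneg (hb a) (hb c))) (sq_nonneg _)
  have row_eq_zero := (Finset.sum_eq_zero_iff_of_nonneg fun a _ =>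
    Finset.sum_nonneg fun c _ => term_nonneg a c).1 h a (Finset.mem_univ a)
  have term_eq_zero :=
    (Finset.sum_eq_zero_iff_of_nonneg fun c _ => term_nonneg a c).1 row_eq_zero c
      (Finset.mem_univ c)
  have hsq : (f a - f c) ^ 2 = 0 := (mul_eq_zero.1 term_eq_zero).resolve_left (by positivity)
  exact sub_eq_zero.1 (pow_eq_zero_iff two_ne_zero |>.1 hsq)

/- When all weights vanish, both sides are `0` because `x / 0 = 0`. -/
theorem sum_mul_mul_one_sub_eq (hb : ∀ a, 0 ≤ b a) (f : A → K) :
    ∑ a, b a * (f a * (1 - f a)) =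
      ((∑ a, b a * f a) * ∑ a, b a * (1 - f a)) / ∑ a, b a
        - dirichletEnergy (fun _ _ => 1) b f / (2 * ∑ a, b a) := by
  rcases eq_or_ne (∑ a, b a) 0 with h | h
  · have hb0 (a : A) : b a = 0 :=
      (Finset.sum_eq_zero_iff_of_nonneg fun a _ => hb a).1 h a (Finset.mem_univ a)
    simp [hb0]
  · have key := two_mul_sum_mul_one_sub (w := fun _ _ => (1 : K)) (fun _ _ => rfl) b f
    simp only [one_mul, ← Finset.mul_sum] at key
    generalize ∑ a, b a * (f a * (1 - f a)) = V at key ⊢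
    generalize (∑ a, b a * (1 - f a)) = N' at key ⊢
    field_simp
    linear_combination -key

end DirichletEnergy

section OrderedRing

variable {R : Type*} [CommRing R] [LinearOrder R] [IsStrictOrderedRing R]

theorem pos_of_convex_of_two_mul_le {B : ℕ → R} {m : ℕ} (hpos : 0 < B 0) (hstart : 2 * B 0 ≤ B 1)
    (hconvex : ∀ k < m, 2 * B (k + 1) ≤ B k + B (k + 2)) : 0 < B (m + 1) := by
  have growth : ∀ k ≤ m, 0 < B k ∧ B k < B (k + 1) := by
    intro k
    induction k with
    | zero => exact fun _ => ⟨hpos, by rw [zero_add]; linarith⟩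
    | succ k ih =>
      intro hk
      obtain ⟨hBk, hlt⟩ := ih (by omega)
      exact ⟨by linarith, by linarith [hconvex k (by omega)]⟩
  obtain ⟨hBm, hlt⟩ := growth m le_rfl
  linarith

theorem sum_max_zero_le {ι : Type*} [Fintype ι] {c : ι → R} {B : R} (hB : 0 ≤ B)
    (hc : ∀ i, c i ≤ B) (hsum : ∑ i, c i ≤ (Fintype.card ι - 1) * B) :
    ∑ i, max 0 (c i) ≤ (Fintype.card ι - 1) * B := by
  classical
  by_cases h : ∃ i, c i < 0
  · obtain ⟨i₀, hi₀⟩ := h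
    calc ∑ i, max 0 (c i) ≤ ∑ i, (B - if i = i₀ then B else 0) := by
          refine Finset.sum_le_sum fun i _ => ?_
          split_ifs with hi
          · simp [hi, hi₀.le]
          · simpa using ⟨hB, hc i⟩
      _ = (Fintype.card ι - 1) * B := by
          simp only [Finset.sum_sub_distrib, Finset.sum_ite_eq', Finset.mem_univ, if_true,
            Finset.sum_const, Finset.card_univ, nsmul_eq_mul]
          ring
  · push Not at h
    simpa only [max_eq_right (h _)] using hsum

theorem mul_mul_div_add_le {K : Type*} [Field K] [LinearOrder K] [IsStrictOrderedRing K]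
    {c k s t : K} (hs : 0 ≤ s) (ht : 0 ≤ t) (hc : c ≤ k * (2 * (s + t))) :
    c * (s * t / (s + t)) ≤ 2 * k * s * t := by
  rcases eq_or_ne (s + t) 0 with h | h
  · simp [show s = 0 by linarith]
  · calc c * (s * t / (s + t)) ≤ k * (2 * (s + t)) * (s * t / (s + t)) := by gcongr
      _ = 2 * k * s * t := by field_simp

end OrderedRing

section Ratio

variable {A : Type*} {x y : A → ℤ}

/-- The share of `x` in `x + y`, which takes the junk value `0` where `x + y` vanishes. -/
def ratio (x y : A → ℤ) (a : A) : ℚ := (x a : ℚ) / ((x + y) a : ℤ)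

theorem cast_add_nonneg (hx : ∀ a, 0 ≤ x a) (hy : ∀ a, 0 ≤ y a) (a : A) :
    (0 : ℚ) ≤ ((x + y) a : ℤ) := by
  exact_mod_cast add_nonneg (hx a) (hy a)

theorem add_mul_ratio (hx : ∀ a, 0 ≤ x a) (hy : ∀ a, 0 ≤ y a) (a : A) :
    (((x + y) a : ℤ) : ℚ) * ratio x y a = x a := by
  by_cases h : (x + y) a = 0
  · have : x a = 0 := by linarith [hx a, hy a, Pi.add_apply x y a]
    simp [ratio, h, this]
  · exact mul_div_cancel₀ _ (by exact_mod_cast h)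

theorem add_mul_one_sub_ratio (hx : ∀ a, 0 ≤ x a) (hy : ∀ a, 0 ≤ y a) (a : A) :
    (((x + y) a : ℤ) : ℚ) * (1 - ratio x y a) = y a := by
  rw [mul_sub, add_mul_ratio hx hy, Pi.add_apply]
  push_cast
  ring

theorem ratio_mul_one_sub_ratio_nonneg (hx : ∀ a, 0 ≤ x a) (hy : ∀ a, 0 ≤ y a) (a : A) :
    0 ≤ ratio x y a * (1 - ratio x y a) := by
  have hxa : (0 : ℚ) ≤ x a := by exact_mod_cast hx a
  have hya : (0 : ℚ) ≤ y a := by exact_mod_cast hy a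
  have hsum : (((x + y) a : ℤ) : ℚ) = x a + y a := by push_cast [Pi.add_apply]; rfl
  refine mul_nonneg ?_ (sub_nonneg.2 ?_) <;> rw [ratio, hsum]
  · positivity
  · exact div_le_one_of_le₀ (by linarith) (by positivity)

theorem mul_eq_mul_of_ratio_eq (hx : ∀ a, 0 ≤ x a) (hy : ∀ a, 0 ≤ y a) {a a' : A}
    (h : ratio x y a = ratio x y a') : x a * y a' = x a' * y a := by
  have : (x a : ℚ) * y a' = x a' * y a := by
    rw [← add_mul_ratio hx hy a, ← add_mul_ratio hx hy a', ← add_mul_one_sub_ratio hx hy a,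
      ← add_mul_one_sub_ratio hx hy a', h]
    ring
  exact_mod_cast this

end Ratio

section CrossArrows

variable {S : Setup} {x y : V S → ℤ}

/-- The set `I_irr` as a type. -/
abbrev IrrIndex (S : Setup) := {i : Fin (S.p + 1) // Iirr S i}

/-- The number of cross arrows `ρ^{[0,j]}_{[i,j']}` from `a` to `b`. -/
def crossArr (S : Setup) : V S → V S → ℕ
  | .inl ⟨i, _⟩, .inl ⟨i', _⟩ => if i.1 = 0 ∧ i'.1 ≠ 0 then 1 else 0
  | .inl _, .inr _ => 0
  | .inr _, _ => 0

/-- The number of arrows from `a` to `b` that are not cross arrows. The truncated subtraction is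
harmless by `crossArr_le`. -/
def innerArr (S : Setup) (a b : V S) : ℕ := arr S a b - crossArr S a b

/-- The number of edges between `a` and `b`, disregarding orientation and cross arrows. -/
def innerEdges (S : Setup) (a b : V S) : ℕ := innerArr S a b + innerArr S b a

/-- The sum `∑_j x_[i,j]`, which does not depend on `i` for `x ∈ L`. -/
def levelSum (S : Setup) (i : IrrIndex S) (x : V S → ℤ) : ℤ := ∑ j, x (vI S i j)

/-- The cardinality of `I_irr ∖ {0}`, the number of levels which `[0,j]` has cross arrows to. -/
def crossLevelCount (S : Setup) : ℤ := Fintype.card (IrrIndex S) - 1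

/-- The pairing of `x` with `ε_a` in the symmetric form of the graph without the cross edges. -/
def defect (S : Setup) (x : V S → ℤ) (a : V S) : ℤ := 2 * x a - ∑ b, innerEdges S a b * x b

theorem crossArr_le (a b : V S) : crossArr S a b ≤ arr S a b := by
  rcases a with ⟨i, j⟩ | ⟨i, j, k⟩ <;> rcases b with ⟨i', j'⟩ | ⟨i', j', k'⟩ <;>
    simp [crossArr, arr]

theorem innerArr_add_crossArr (a b : V S) :
    (arr S a b : ℤ) = innerArr S a b + crossArr S a b := by
  exact_mod_cast (Nat.sub_add_cancel (crossArr_le a b)).symm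

theorem innerEdges_comm (a b : V S) : innerEdges S a b = innerEdges S b a := add_comm _ _

theorem levelSum_eq_of_inL (hx : inL S x) (i : IrrIndex S) :
    levelSum S i x = levelSum S (i0 S) x := by
  by_cases h : i.1 = 0
  · rw [show i = i0 S from Subtype.ext h]
  · exact (hx i h).symm

theorem crossLevelCount_eq_sum :
    crossLevelCount S = ∑ i : IrrIndex S, if i.1 ≠ 0 then 1 else 0 := by
  have h (i : IrrIndex S) : (if i.1 ≠ 0 then 1 else 0 : ℤ) = 1 - if i = i0 S then 1 else 0 := by
    by_cases hi : i = i0 S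
    · simp [hi, i0]
    · have : i.1 ≠ 0 := fun h => hi (Subtype.ext h)
      simp [hi, this]
  simp [h, crossLevelCount]

theorem sum_crossArr_mul_mul (hy : inL S y) :
    ∑ a, ∑ b, (crossArr S a b : ℤ) * x a * y b =
      crossLevelCount S * levelSum S (i0 S) x * levelSum S (i0 S) y := by
  have by_levels : ∑ a, ∑ b, (crossArr S a b : ℤ) * x a * y b =
      ∑ i : IrrIndex S, ∑ i' : IrrIndex S,
        (if i.1 = 0 ∧ i'.1 ≠ 0 then 1 else 0) * (levelSum S i x * levelSum S i' y) := by
    simp only [Fintype.sum_sum_type, Fintype.sum_sigma, crossArr, levelSum, vI, Nat.cast_zero,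
      zero_mul, Finset.sum_const_zero, add_zero, Finset.sum_mul_sum]
    refine Finset.sum_congr rfl fun i _ => ?_
    rw [Finset.sum_comm]
    push_cast
    simp only [Finset.mul_sum, mul_assoc]
  rw [by_levels, Finset.sum_eq_single (i0 S)]
  · rw [crossLevelCount_eq_sum, Finset.sum_mul, Finset.sum_mul]
    refine Finset.sum_congr rfl fun i' _ => ?_
    rw [levelSum_eq_of_inL hy i', mul_assoc]
    simp only [show (i0 S).1 = 0 from rfl, true_and]
  · intro i _ hi
    have : i.1 ≠ 0 := fun h => hi (Subtype.ext h)
    simp [this]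
  · simp

theorem sum_defect_mul : ∑ a, defect S x a * y a =
    2 * ∑ a, x a * y a - ∑ a, ∑ b, (innerArr S a b : ℤ) * x a * y b
      - ∑ a, ∑ b, (innerArr S a b : ℤ) * y a * x b := by
  have swap : ∑ a, ∑ b, (innerArr S a b : ℤ) * x a * y b =
      ∑ a, ∑ b, (innerArr S b a : ℤ) * x b * y a := Finset.sum_comm
  rw [swap, Finset.mul_sum, ← Finset.sum_sub_distrib, ← Finset.sum_sub_distrib]
  refine Finset.sum_congr rfl fun a _ => ?_
  rw [defect, sub_mul, Finset.sum_mul, sub_sub, ← Finset.sum_add_distrib, mul_assoc]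
  congr 1
  refine Finset.sum_congr rfl fun b _ => ?_
  rw [innerEdges]
  push_cast
  ring

theorem eform_eq_sub_sum_crossArr : eform S x y =
    ∑ a, x a * y a - ∑ a, ∑ b, (innerArr S a b : ℤ) * x a * y b
      - ∑ a, ∑ b, (crossArr S a b : ℤ) * x a * y b := by
  simp only [eform, innerArr_add_crossArr, add_mul, Finset.sum_add_distrib, sub_add_eq_sub_sub]

theorem bform_eq_of_inL (hx : inL S x) (hy : inL S y) : bform S x y =
    ∑ a, defect S x a * y a
      - 2 * crossLevelCount S * levelSum S (i0 S) x * levelSum S (i0 S) y := by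
  rw [bform, eform_eq_sub_sum_crossArr, eform_eq_sub_sum_crossArr, sum_crossArr_mul_mul hx,
    sum_crossArr_mul_mul hy, sum_defect_mul, Finset.sum_congr rfl fun a _ => mul_comm (y a) (x a)]
  ring

end CrossArrows

section QuasiFundamental

variable {S : Setup} {β : V S → ℤ}

theorem sum_mul_epsJ (J : ∀ i : Fin (S.p + 1), Fin (S.m i)) (g : V S → ℤ) :
    ∑ a, g a * epsJ S J a = ∑ i : IrrIndex S, g (vI S i (J i.1)) := by
  simp [Fintype.sum_sum_type, Fintype.sum_sigma, epsJ, vI, Fin.val_inj]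

theorem levelSum_epsJ (J : ∀ i : Fin (S.p + 1), Fin (S.m i)) (i : IrrIndex S) :
    levelSum S i (epsJ S J) = 1 := by
  simp [levelSum, vI, epsJ, Fin.val_inj]

theorem inL_epsJ (J : ∀ i : Fin (S.p + 1), Fin (S.m i)) : inL S (epsJ S J) := fun i _ =>
  (levelSum_epsJ J (i0 S)).trans (levelSum_epsJ J i).symm

theorem levelSum_eps_inr (v : Vr S) (i : IrrIndex S) : levelSum S i (eps S (.inr v)) = 0 := by
  simp [levelSum, vI, eps]

theorem inL_eps_inr (v : Vr S) : inL S (eps S (.inr v)) := fun i _ =>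
  (levelSum_eps_inr v (i0 S)).trans (levelSum_eps_inr v i).symm

theorem quasiFund.defect_inr_nonpos (hβ : quasiFund S β) (v : Vr S) : defect S β (.inr v) ≤ 0 := by
  obtain ⟨hL, -, -, -, hleg, -⟩ := hβ
  have h := hleg v.1 v.2.1 v.2.2
  rw [bform_eq_of_inL hL (inL_eps_inr _), levelSum_eps_inr] at h
  simpa [eps] using h

theorem quasiFund.sum_defect_le (hβ : quasiFund S β) (J : ∀ i : Fin (S.p + 1), Fin (S.m i)) :
    ∑ i : IrrIndex S, defect S β (vI S i (J i.1)) ≤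
      crossLevelCount S * (2 * levelSum S (i0 S) β) := by
  obtain ⟨hL, -, -, hJ, -, -⟩ := hβ
  have h := hJ J
  rw [bform_eq_of_inL hL (inL_epsJ J), levelSum_epsJ, sum_mul_epsJ] at h
  linarith

theorem levelSum_nonneg (hβ : ∀ a, 0 ≤ β a) (i : IrrIndex S) : 0 ≤ levelSum S i β :=
  Finset.sum_nonneg fun _ _ => hβ _

theorem defect_vI_le (hβ : ∀ a, 0 ≤ β a) (i : IrrIndex S) (j : Fin (S.m i.1)) :
    defect S β (vI S i j) ≤ 2 * levelSum S i β := by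
  have hle : β (vI S i j) ≤ levelSum S i β :=
    Finset.single_le_sum (f := fun j => β (vI S i j)) (fun _ _ => hβ _) (Finset.mem_univ j)
  have hedges : 0 ≤ ∑ b, (innerEdges S (vI S i j) b : ℤ) * β b :=
    Finset.sum_nonneg fun b _ => mul_nonneg (by positivity) (hβ b)
  rw [defect]
  linarith

/-- Bounds `C i ≥ 0` for the defects of `β` at the vertices `[i,j]`, small enough in total to be
absorbed by the cross term in `bform_eq_of_inL`. -/
structure IsLevelBound (S : Setup) (β : V S → ℤ) (C : IrrIndex S → ℤ) : Prop where
  nonneg : ∀ i, 0 ≤ C i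
  defect_le : ∀ i j, defect S β (vI S i j) ≤ C i
  sum_le : ∑ i, C i ≤ crossLevelCount S * (2 * levelSum S (i0 S) β)

theorem quasiFund.exists_isLevelBound (hβ : quasiFund S β) : ∃ C, IsLevelBound S β C := by
  have exists_max (i : Fin (S.p + 1)) : ∃ j : Fin (S.m i), ∀ hi : Iirr S i, ∀ j',
      defect S β (vI S ⟨i, hi⟩ j') ≤ defect S β (vI S ⟨i, hi⟩ j) := by
    have : Nonempty (Fin (S.m i)) := ⟨⟨0, S.hm i⟩⟩
    by_cases hi : Iirr S i
    · obtain ⟨j, hj⟩ := Finite.exists_max fun j => defect S β (vI S ⟨i, hi⟩ j)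
      exact ⟨j, fun _ => hj⟩
    · exact ⟨⟨0, S.hm i⟩, fun h => absurd h hi⟩
  choose J hJ using exists_max
  refine ⟨fun i => max 0 (defect S β (vI S i (J i.1))), fun i => le_max_left _ _,
    fun i j => (hJ i.1 i.2 j).trans (le_max_right _ _), ?_⟩
  refine sum_max_zero_le ?_ (fun i => ?_) (hβ.sum_defect_le J)
  · exact mul_nonneg zero_le_two (levelSum_nonneg hβ.2.1 _)
  · rw [← levelSum_eq_of_inL hβ.1 i]
    exact defect_vI_le hβ.2.1 i _

end QuasiFundamental

section EnergyEstimate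

variable {S : Setup} {x y : V S → ℤ}

/-- The Dirichlet energy of the share of `x` in `x + y` along the edges that are not cross
edges. -/
def innerEnergy (S : Setup) (x y : V S → ℤ) : ℚ :=
  dirichletEnergy (fun a c => (innerEdges S a c : ℚ)) (fun a => (((x + y) a : ℤ) : ℚ)) (ratio x y)

/-- The Dirichlet energy of the share of `x` in `x + y` on the complete graph with vertices
`[i,j]`, `i` fixed. -/
def levelEnergy (S : Setup) (i : IrrIndex S) (x y : V S → ℤ) : ℚ :=
  dirichletEnergy (fun _ _ => 1) (fun j => (((x + y) (vI S i j) : ℤ) : ℚ))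
    (fun j => ratio x y (vI S i j))

theorem innerEnergy_nonneg (hx : ∀ a, 0 ≤ x a) (hy : ∀ a, 0 ≤ y a) : 0 ≤ innerEnergy S x y :=
  dirichletEnergy_nonneg (fun _ _ => Nat.cast_nonneg _) (cast_add_nonneg hx hy) _

theorem levelEnergy_nonneg (hx : ∀ a, 0 ≤ x a) (hy : ∀ a, 0 ≤ y a) (i : IrrIndex S) :
    0 ≤ levelEnergy S i x y :=
  dirichletEnergy_nonneg (fun _ _ => zero_le_one) (fun _ => cast_add_nonneg hx hy _) _

theorem sum_defect_mul_eq_sub_innerEnergy (hx : ∀ a, 0 ≤ x a) (hy : ∀ a, 0 ≤ y a) :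
    ((∑ a, defect S x a * y a : ℤ) : ℚ) =
      ∑ a, (defect S (x + y) a : ℚ) * (((x + y) a : ℤ) * (ratio x y a * (1 - ratio x y a)))
        - innerEnergy S x y / 2 := by
  have kac := two_mul_sum_mul_one_sub (w := fun a c => (innerEdges S a c : ℚ))
    (fun a c => by rw [innerEdges_comm]) (fun a => (((x + y) a : ℤ) : ℚ)) (ratio x y)
  have diagonal (a : V S) : 2 * (x a : ℚ) * y a =
      2 * ((x + y) a : ℤ) * (((x + y) a : ℤ) * (ratio x y a * (1 - ratio x y a))) := by
    rw [← add_mul_ratio hx hy a, ← add_mul_one_sub_ratio hx hy a]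
    ring
  simp only [add_mul_ratio hx hy, add_mul_one_sub_ratio hx hy] at kac
  rw [innerEnergy]
  simp only [defect, Int.cast_sum, Int.cast_mul, Int.cast_sub, Int.cast_natCast, Int.cast_ofNat,
    sub_mul, Finset.sum_sub_distrib, diagonal]
  linear_combination -kac / 2

theorem sum_mul_ratio_mul_one_sub_ratio (hx : ∀ a, 0 ≤ x a) (hy : ∀ a, 0 ≤ y a)
    (i : IrrIndex S) :
    ∑ j, (((x + y) (vI S i j) : ℤ) : ℚ) *
        (ratio x y (vI S i j) * (1 - ratio x y (vI S i j))) =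
      (levelSum S i x * levelSum S i y : ℚ) / (levelSum S i (x + y) : ℤ)
        - levelEnergy S i x y / (2 * (levelSum S i (x + y) : ℤ)) := by
  rw [sum_mul_mul_one_sub_eq fun _ => cast_add_nonneg hx hy _]
  simp only [levelEnergy, levelSum, Int.cast_sum, add_mul_ratio hx hy,
    add_mul_one_sub_ratio hx hy]

theorem sum_defect_mul_le {C : IrrIndex S → ℤ} {g : V S → ℚ} (hg : ∀ a, 0 ≤ g a)
    {β : V S → ℤ} (hleg : ∀ v, defect S β (.inr v) ≤ 0)
    (hC : ∀ i j, defect S β (vI S i j) ≤ C i) :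
    ∑ a, (defect S β a : ℚ) * g a ≤ ∑ i, C i * ∑ j, g (vI S i j) := by
  simp only [Fintype.sum_sum_type, Fintype.sum_sigma (fun _ : Vb S => _), Finset.mul_sum]
  have legs : ∑ v : Vr S, (defect S β (.inr v) : ℚ) * g (.inr v) ≤ 0 :=
    Finset.sum_nonpos fun v _ =>
      mul_nonpos_of_nonpos_of_nonneg (by exact_mod_cast hleg v) (hg _)
  have base : ∑ i, ∑ j, (defect S β (.inl ⟨i, j⟩) : ℚ) * g (.inl ⟨i, j⟩) ≤
      ∑ i, ∑ j, (C i : ℚ) * g (vI S i j) :=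
    Finset.sum_le_sum fun i _ => Finset.sum_le_sum fun j _ =>
      mul_le_mul_of_nonneg_right (by exact_mod_cast hC i j) (hg _)
  linarith

theorem bform_le_neg_energy (hx : inLpos S x) (hy : inLpos S y) (hxy : quasiFund S (x + y))
    {C : IrrIndex S → ℤ} (hC : IsLevelBound S (x + y) C) :
    (bform S x y : ℚ) ≤
      -∑ i, C i * (levelEnergy S i x y / (2 * (levelSum S (i0 S) (x + y) : ℤ)))
        - innerEnergy S x y / 2 := by
  obtain ⟨hxL, hx⟩ := hx
  obtain ⟨hyL, hy⟩ := hy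
  have defect_le := sum_defect_mul_le
    (g := fun a => ((x + y) a : ℤ) * (ratio x y a * (1 - ratio x y a)))
    (fun a => mul_nonneg (cast_add_nonneg hx hy a) (ratio_mul_one_sub_ratio_nonneg hx hy a))
    hxy.defect_inr_nonpos hC.defect_le
  simp only [sum_mul_ratio_mul_one_sub_ratio hx hy] at defect_le
  simp only [levelSum_eq_of_inL hxL, levelSum_eq_of_inL hyL, levelSum_eq_of_inL hxy.1,
    mul_sub (Int.cast (C _)), Finset.sum_sub_distrib, ← Finset.sum_mul] at defect_le
  have level_add : levelSum S (i0 S) (x + y) = levelSum S (i0 S) x + levelSum S (i0 S) y :=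
    Finset.sum_add_distrib
  have cross_le : (∑ i, C i : ℚ) * ((levelSum S (i0 S) x * levelSum S (i0 S) y : ℚ) /
      (levelSum S (i0 S) (x + y) : ℤ)) ≤
        2 * crossLevelCount S * levelSum S (i0 S) x * levelSum S (i0 S) y := by
    rw [level_add, Int.cast_add]
    refine mul_mul_div_add_le (by exact_mod_cast levelSum_nonneg hx (i0 S))
      (by exact_mod_cast levelSum_nonneg hy (i0 S)) ?_
    rw [← Int.cast_add, ← level_add]
    exact_mod_cast hC.sum_le
  rw [bform_eq_of_inL hxL hyL, Int.cast_sub, sum_defect_mul_eq_sub_innerEnergy hx hy]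
  push_cast
  linarith

end EnergyEstimate

section Adjacency

variable {S : Setup}

theorem vI_eq_iff {i i' : IrrIndex S} {j : Fin (S.m i.1)} {j' : Fin (S.m i'.1)} :
    vI S i j = .inl ⟨i', j'⟩ ↔ i.1 = i'.1 ∧ (j : ℕ) = j' := by
  refine ⟨fun h => by cases h; exact ⟨rfl, rfl⟩, ?_⟩
  rintro ⟨hi, hj⟩
  obtain rfl := Subtype.ext hi
  obtain rfl := Fin.ext hj
  rfl

theorem legIndex_eq_iff {i i' : Fin (S.p + 1)} {j : Fin (S.m i)} {j' : Fin (S.m i')}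
    {k : Fin (S.e i j - 1)} {k' : Fin (S.e i' j' - 1)} :
    (⟨i, j, k⟩ : Vr S) = ⟨i', j', k'⟩ ↔ i = i' ∧ (j : ℕ) = j' ∧ (k : ℕ) = k' := by
  refine ⟨fun h => by cases h; exact ⟨rfl, rfl, rfl⟩, ?_⟩
  rintro ⟨rfl, hj, hk⟩
  obtain rfl := Fin.ext hj
  obtain rfl := Fin.ext hk
  rfl

/-- The vertices `[i,j], [i,j,1], [i,j,2], …` of a leg, followed by `none` past its end. -/
def legVertex (S : Setup) (i : IrrIndex S) (j : Fin (S.m i.1)) : ℕ → Option (V S)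
  | 0 => some (vI S i j)
  | k + 1 => if h : k < S.e i.1 j - 1 then some (.inr ⟨i.1, j, ⟨k, h⟩⟩) else none

theorem legVertex_eq_some_inl {i i' : IrrIndex S} {j : Fin (S.m i.1)} {j' : Fin (S.m i'.1)}
    {k : ℕ} : legVertex S i j k = some (.inl ⟨i', j'⟩) ↔ i.1 = i'.1 ∧ (j : ℕ) = j' ∧ k = 0 := by
  cases k with
  | zero => simp only [legVertex, Option.some.injEq, vI_eq_iff, and_true]
  | succ k => simp only [legVertex]; split_ifs <;> simp

theorem legVertex_succ_eq_some_inr {i : IrrIndex S} {j : Fin (S.m i.1)} {i' : Fin (S.p + 1)}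
    {j' : Fin (S.m i')} {k' : Fin (S.e i' j' - 1)} {k : ℕ} :
    legVertex S i j (k + 1) = some (.inr ⟨i', j', k'⟩) ↔
      i.1 = i' ∧ (j : ℕ) = j' ∧ k = (k' : ℕ) := by
  simp only [legVertex]
  split_ifs with hk
  · simp only [Option.some.injEq, Sum.inr.injEq, legIndex_eq_iff]
  · simp only [false_iff]
    rintro ⟨rfl, hj, rfl⟩
    obtain rfl := Fin.ext hj
    exact hk k'.2

theorem dcnt_comm (i : Fin (S.p + 1)) (j j' : Fin (S.m i)) : dcnt S i j j' = dcnt S i j' j := by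
  rw [dcnt, dcnt, ← neg_sub, Polynomial.natDegree_neg]

theorem dcnt_pos_or_dcnt_pos {i : Fin (S.p + 1)} {j j' : Fin (S.m i)} (h : 0 < dcnt S i j j')
    (l : Fin (S.m i)) : 0 < dcnt S i j l ∨ 0 < dcnt S i l j' := by
  have hdeg := Polynomial.natDegree_add_le (S.q i j - S.q i l) (S.q i l - S.q i j')
  rw [sub_add_sub_cancel] at hdeg
  unfold dcnt at *
  rcases le_max_iff.1 hdeg with hle | hle
  · left; omega
  · right; omega

theorem innerEdges_vI_vI (i : IrrIndex S) (j j' : Fin (S.m i.1)) :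
    innerEdges S (vI S i j) (vI S i j') = dcnt S i.1 j j' := by
  rcases lt_trichotomy j j' with h | rfl | h
  · simp [innerEdges, innerArr, vI, arr, crossArr, h, h.le]
  · simp [innerEdges, innerArr, vI, arr, crossArr, dcnt]
  · simp [innerEdges, innerArr, vI, arr, crossArr, h, h.le, dcnt_comm]

theorem innerEdges_vI_vI_of_ne {i i' : IrrIndex S} (h : i ≠ i') (j : Fin (S.m i.1))
    (j' : Fin (S.m i'.1)) : innerEdges S (vI S i j) (vI S i' j') = 0 := by
  simp [innerEdges, innerArr, vI, arr, crossArr, h, h.symm]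

theorem innerEdges_vI_inr (i : IrrIndex S) (j : Fin (S.m i.1)) (v : Vr S) :
    innerEdges S (vI S i j) (.inr v) =
      (if legVertex S i j 1 = some (.inr v) then 1 else 0) +
        if ¬ Iirr S v.1 ∧ i.1 = 0 ∧ (v.2.2 : ℕ) = 0 then 1 else 0 := by
  obtain ⟨i', j', k'⟩ := v
  have single_block (h : ¬ Iirr S i') : (j' : ℕ) = 0 := by
    have := j'.2
    simp only [Iirr] at h
    omega
  have leg_iff : legVertex S i j (0 + 1) = some (.inr ⟨i', j', k'⟩) ↔
      i' = i.1 ∧ (j' : ℕ) = j ∧ (k' : ℕ) = 0 := by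
    rw [legVertex_succ_eq_some_inr]
    simp only [eq_comm]
  rw [zero_add] at leg_iff
  have regular_iff : (¬ Iirr S i' ∧ i.1 = 0 ∧ (j' : ℕ) = 0 ∧ (k' : ℕ) = 0) ↔
      ¬ Iirr S i' ∧ i.1 = 0 ∧ (k' : ℕ) = 0 :=
    ⟨fun h => ⟨h.1, h.2.1, h.2.2.2⟩, fun h => ⟨h.1, h.2.1, single_block h.1, h.2.2⟩⟩
  simp only [innerEdges, innerArr, vI, arr, crossArr, leg_iff, regular_iff, zero_tsub, zero_add,
    Nat.sub_zero]

theorem innerEdges_inr (i : IrrIndex S) (j : Fin (S.m i.1)) (k : Fin (S.e i.1 j - 1)) (a : V S) :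
    innerEdges S (.inr ⟨i.1, j, k⟩) a =
      (if legVertex S i j k = some a then 1 else 0) +
        if legVertex S i j (k + 2) = some a then 1 else 0 := by
  obtain ⟨k, hk⟩ := k
  rcases a with ⟨i', j'⟩ | ⟨i', j', k'⟩
  · simp [innerEdges, innerArr, arr, crossArr, legVertex_eq_some_inl, i.2]
  · have next : legVertex S i j (k + 2) = some (.inr ⟨i', j', k'⟩) ↔
        i' = i.1 ∧ (j' : ℕ) = j ∧ (k' : ℕ) = k + 1 := by
      rw [legVertex_succ_eq_some_inr]
      simp only [eq_comm]
    cases k with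
    | zero =>
      have start : legVertex S i j 0 = some (vI S i j) := rfl
      simp [innerEdges, innerArr, arr, crossArr, next, start, vI]
    | succ k => simp [innerEdges, innerArr, arr, crossArr, next, legVertex_succ_eq_some_inr]

end Adjacency

section LegConvexity

variable {S : Setup} {β : V S → ℤ}

theorem sum_ite_eq_some_mul {A R : Type*} [Fintype A] [DecidableEq A] [NonAssocSemiring R]
    (o : Option A) (g : A → R) : ∑ a, (if o = some a then 1 else 0) * g a = o.elim 0 g := by
  cases o <;> simp

/-- The `k`-th entry of `β` along the leg starting at `[i,j]`, extended by `0` past its end. -/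
def legEntry (β : V S → ℤ) (i : IrrIndex S) (j : Fin (S.m i.1)) (k : ℕ) : ℤ :=
  (legVertex S i j k).elim 0 β

theorem two_mul_legEntry_succ_le (hleg : ∀ v, defect S β (.inr v) ≤ 0) (i : IrrIndex S)
    (j : Fin (S.m i.1)) {k : ℕ} (hk : k < S.e i.1 j - 1) :
    2 * legEntry β i j (k + 1) ≤ legEntry β i j k + legEntry β i j (k + 2) := by
  have h := hleg ⟨i.1, j, ⟨k, hk⟩⟩
  have entry : legEntry β i j (k + 1) = β (.inr ⟨i.1, j, ⟨k, hk⟩⟩) := by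
    simp [legEntry, legVertex, hk]
  simp only [defect, innerEdges_inr, Nat.cast_add, Nat.cast_ite, Nat.cast_one, Nat.cast_zero,
    add_mul, Finset.sum_add_distrib, sum_ite_eq_some_mul] at h
  rw [entry]
  exact sub_nonpos.1 h

theorem legEntry_last (i : IrrIndex S) (j : Fin (S.m i.1)) :
    legEntry β i j (S.e i.1 j - 1 + 1) = 0 := by
  simp [legEntry, legVertex]

theorem defect_vI_eq_of_isolated (i : IrrIndex S) (j : Fin (S.m i.1))
    (hbase : ∀ j', 0 < dcnt S i.1 j j' → β (vI S i j') = 0)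
    (hreg : i.1 = 0 → ∀ v : Vr S, ¬ Iirr S v.1 → (v.2.2 : ℕ) = 0 → β (.inr v) = 0) :
    defect S β (vI S i j) = 2 * legEntry β i j 0 - legEntry β i j 1 := by
  have neighbours (a : V S) : (innerEdges S (vI S i j) a : ℤ) * β a =
      (if legVertex S i j 1 = some a then 1 else 0) * β a := by
    rcases a with ⟨i', j'⟩ | v
    · rw [if_neg (by simp [legVertex_eq_some_inl]), zero_mul, mul_eq_zero, ← vI]
      by_cases hi : i = i'
      · subst hi
        rw [innerEdges_vI_vI]
        exact (Nat.eq_zero_or_pos _).imp (by exact_mod_cast ·) (hbase j')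
      · exact .inl (by exact_mod_cast innerEdges_vI_vI_of_ne hi j j')
    · rw [innerEdges_vI_inr, Nat.cast_add, add_mul]
      have regular : ((if ¬ Iirr S v.1 ∧ i.1 = 0 ∧ (v.2.2 : ℕ) = 0 then 1 else 0 : ℕ) : ℤ) *
          β (.inr v) = 0 := by
        split_ifs with h
        · rw [hreg h.2.1 v h.1 h.2.2, mul_zero]
        · simp
      rw [regular, add_zero, Nat.cast_ite, Nat.cast_one, Nat.cast_zero]
  simp only [defect, neighbours, sum_ite_eq_some_mul]
  rfl

/- Otherwise `[i,j]` only meets its leg, along which `β` would be convex and strictly increasing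
from the start, although it vanishes past the end. -/
theorem exists_adjacent_of_defect_nonpos (hβ : ∀ a, 0 ≤ β a)
    (hleg : ∀ v, defect S β (.inr v) ≤ 0) {i : IrrIndex S} {j : Fin (S.m i.1)}
    (hpos : 0 < β (vI S i j)) (hdefect : defect S β (vI S i j) ≤ 0) :
    (∃ j', 0 < dcnt S i.1 j j' ∧ 0 < β (vI S i j')) ∨
      i.1 = 0 ∧ ∃ v : Vr S, ¬ Iirr S v.1 ∧ (v.2.2 : ℕ) = 0 ∧ 0 < β (.inr v) := by
  by_contra! h
  obtain ⟨hbase, hreg⟩ := h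
  rw [defect_vI_eq_of_isolated i j (fun j' hj' => (hbase j' hj').antisymm (hβ _))
    (fun hi v hv hv0 => (hreg hi v hv hv0).antisymm (hβ _))] at hdefect
  have last_pos := pos_of_convex_of_two_mul_le (B := legEntry β i j) hpos (by linarith)
    fun k hk => two_mul_legEntry_succ_le hleg i j hk
  exact last_pos.ne' (legEntry_last i j)

end LegConvexity

section Equality

variable {S : Setup} {x y : V S → ℤ}

theorem energy_eq_zero_of_bform_nonneg (hx : inLpos S x) (hy : inLpos S y)
    (hxy : quasiFund S (x + y)) (h0 : 0 ≤ bform S x y) {C : IrrIndex S → ℤ}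
    (hC : IsLevelBound S (x + y) C) :
    innerEnergy S x y = 0 ∧
      ∀ i, C i * (levelEnergy S i x y / (2 * (levelSum S (i0 S) (x + y) : ℤ))) = 0 := by
  have hle := bform_le_neg_energy hx hy hxy hC
  have hcast : (0 : ℚ) ≤ bform S x y := by exact_mod_cast h0
  have inner_nonneg := innerEnergy_nonneg hx.2 hy.2
  have level_nonneg (i : IrrIndex S) :
      0 ≤ C i * (levelEnergy S i x y / (2 * (levelSum S (i0 S) (x + y) : ℤ))) := by
    have hCi : (0 : ℚ) ≤ C i := by exact_mod_cast hC.nonneg i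
    have hn : (0 : ℚ) ≤ levelSum S (i0 S) (x + y) := by
      exact_mod_cast levelSum_nonneg hxy.2.1 (i0 S)
    have := levelEnergy_nonneg hx.2 hy.2 i
    positivity
  have sum_nonneg := Finset.sum_nonneg fun i (_ : i ∈ Finset.univ) => level_nonneg i
  have sum_eq_zero := le_antisymm (by linarith) sum_nonneg
  exact ⟨by linarith, fun i =>
    (Finset.sum_eq_zero_iff_of_nonneg fun i _ => level_nonneg i).1 sum_eq_zero i
      (Finset.mem_univ i)⟩

theorem ratio_eq_of_innerEdges_pos (hx : inLpos S x) (hy : inLpos S y)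
    (hxy : quasiFund S (x + y)) (h0 : 0 ≤ bform S x y) {a c : V S} (ha : 0 < (x + y) a)
    (hc : 0 < (x + y) c) (hac : 0 < innerEdges S a c) : ratio x y a = ratio x y c := by
  obtain ⟨C, hC⟩ := hxy.exists_isLevelBound
  exact eq_of_dirichletEnergy_eq_zero (fun _ _ => Nat.cast_nonneg _) (cast_add_nonneg hx.2 hy.2)
    (energy_eq_zero_of_bform_nonneg hx hy hxy h0 hC).1 (by exact_mod_cast hac)
    (by exact_mod_cast ha) (by exact_mod_cast hc)

theorem ratio_vI_eq_of_bound_pos (hx : inLpos S x) (hy : inLpos S y)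
    (hxy : quasiFund S (x + y)) (h0 : 0 ≤ bform S x y) {C : IrrIndex S → ℤ}
    (hC : IsLevelBound S (x + y) C) {i : IrrIndex S} (hCi : 0 < C i) {j j' : Fin (S.m i.1)}
    (hj : 0 < (x + y) (vI S i j)) (hj' : 0 < (x + y) (vI S i j')) :
    ratio x y (vI S i j) = ratio x y (vI S i j') := by
  have hn : 0 < levelSum S (i0 S) (x + y) := by
    rw [← levelSum_eq_of_inL hxy.1 i]
    exact Finset.sum_pos' (fun _ _ => hxy.2.1 _) ⟨j, Finset.mem_univ j, hj⟩
  have hCi' : (C i : ℚ) ≠ 0 := by exact_mod_cast hCi.ne'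
  have hn' : (2 * (levelSum S (i0 S) (x + y) : ℤ) : ℚ) ≠ 0 := by
    exact_mod_cast (mul_pos two_pos hn).ne'
  have level_eq_zero : levelEnergy S i x y = 0 := by
    have h := (energy_eq_zero_of_bform_nonneg hx hy hxy h0 hC).2 i
    simpa [hCi'] using (div_eq_zero_iff.1 ((mul_eq_zero.1 h).resolve_left hCi')).resolve_right hn'
  exact eq_of_dirichletEnergy_eq_zero (f := fun j => ratio x y (vI S i j))
    (fun _ _ => zero_le_one) (fun _ => cast_add_nonneg hx.2 hy.2 _) level_eq_zero one_pos
    (by exact_mod_cast hj) (by exact_mod_cast hj')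

/- Where the level bound vanishes, `[i,j]` has a neighbour in the support: either some `[i,l]`, in
which case `[i,j']` is adjacent to `[i,j]` or to `[i,l]` by the ultrametric property of `dcnt`, or
the first vertex of a regular leg, which is adjacent to every `[0,j']`. -/
theorem ratio_vI_eq (hx : inLpos S x) (hy : inLpos S y) (hxy : quasiFund S (x + y))
    (h0 : 0 ≤ bform S x y) {i : IrrIndex S} {j j' : Fin (S.m i.1)}
    (hj : 0 < (x + y) (vI S i j)) (hj' : 0 < (x + y) (vI S i j')) :
    ratio x y (vI S i j) = ratio x y (vI S i j') := by
  obtain ⟨C, hC⟩ := hxy.exists_isLevelBound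
  rcases (hC.nonneg i).lt_or_eq with hCi | hCi
  · exact ratio_vI_eq_of_bound_pos hx hy hxy h0 hC hCi hj hj'
  have edge {a c : V S} := ratio_eq_of_innerEdges_pos hx hy hxy h0 (a := a) (c := c)
  rcases exists_adjacent_of_defect_nonpos hxy.2.1 hxy.defect_inr_nonpos hj
    (hCi ▸ hC.defect_le i j) with ⟨l, hjl, hl⟩ | ⟨hi, v, hv, hv0, hvpos⟩
  · rcases dcnt_pos_or_dcnt_pos hjl j' with h | h
    · exact edge hj hj' (by rwa [innerEdges_vI_vI])
    · exact (edge hj hl (by rwa [innerEdges_vI_vI])).trans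
        (edge hj' hl (by rwa [innerEdges_vI_vI])).symm
  · have adjacent (j : Fin (S.m i.1)) : 0 < innerEdges S (vI S i j) (.inr v) := by
      simp [innerEdges_vI_inr, hv, hi, hv0]
    exact (edge hj hvpos (adjacent j)).trans (edge hj' hvpos (adjacent j')).symm

theorem ratio_vI_eq_levelSum_div (hx : inLpos S x) (hy : inLpos S y) (hxy : quasiFund S (x + y))
    (h0 : 0 ≤ bform S x y) {i : IrrIndex S} {j : Fin (S.m i.1)} (hj : 0 < (x + y) (vI S i j)) :
    ratio x y (vI S i j) =
      (levelSum S (i0 S) x : ℚ) / (levelSum S (i0 S) (x + y) : ℤ) := by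
  rw [← levelSum_eq_of_inL hx.1 i, ← levelSum_eq_of_inL hxy.1 i]
  have hn : 0 < levelSum S i (x + y) :=
    Finset.sum_pos' (fun _ _ => hxy.2.1 _) ⟨j, Finset.mem_univ j, hj⟩
  rw [eq_div_iff (by exact_mod_cast hn.ne'), levelSum, levelSum, Int.cast_sum, Int.cast_sum,
    Finset.mul_sum]
  refine Finset.sum_congr rfl fun j' _ => ?_
  rw [← add_mul_ratio hx.2 hy.2 (vI S i j'), mul_comm]
  rcases (hxy.2.1 (vI S i j')).lt_or_eq with hj' | hj'
  · rw [ratio_vI_eq hx hy hxy h0 hj hj']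
  · rw [← hj', Int.cast_zero, zero_mul, zero_mul]

theorem innerEdges_inr_pos {v : Vr S} {a : V S}
    (h : 0 < arr S (.inr v) a + arr S a (.inr v)) : 0 < innerEdges S (.inr v) a := by
  have hcross : crossArr S a (.inr v) = 0 := by cases a <;> rfl
  rwa [innerEdges, innerArr, innerArr, hcross, show crossArr S (.inr v) a = 0 from rfl]

theorem ratio_eq_of_mem_supp (hx : inLpos S x) (hy : inLpos S y) (hxy : quasiFund S (x + y))
    (h0 : 0 ≤ bform S x y) {a c : V S} (ha : a ∈ supp S (x + y)) (hc : c ∈ supp S (x + y)) :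
    ratio x y a = ratio x y c := by
  have pos {a : V S} (ha : a ∈ supp S (x + y)) : 0 < (x + y) a := (hxy.2.1 a).lt_of_ne' ha
  have ⟨_, _, _, _, _, hconn⟩ := hxy
  induction hconn a ha c hc with
  | refl => rfl
  | @tail b c _ hbc ih =>
    obtain ⟨hedge, hb, hc⟩ := hbc
    refine (ih hb).trans ?_
    rcases b with ⟨i, j⟩ | v
    · rcases c with ⟨i', j'⟩ | v'
      · exact (ratio_vI_eq_levelSum_div hx hy hxy h0 (pos hb)).trans
          (ratio_vI_eq_levelSum_div hx hy hxy h0 (pos hc)).symm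
      · exact (ratio_eq_of_innerEdges_pos hx hy hxy h0 (pos hc) (pos hb)
          (innerEdges_inr_pos (by rwa [add_comm]))).symm
    · exact ratio_eq_of_innerEdges_pos hx hy hxy h0 (pos hb) (pos hc) (innerEdges_inr_pos hedge)

theorem mul_eq_mul_of_bform_nonneg (hx : inLpos S x) (hy : inLpos S y)
    (hxy : quasiFund S (x + y)) (h0 : 0 ≤ bform S x y) (a c : V S) :
    x a * y c = x c * y a := by
  have eq_zero {a : V S} (ha : a ∉ supp S (x + y)) : x a = 0 ∧ y a = 0 :=
    (add_eq_zero_iff_of_nonneg (hx.2 a) (hy.2 a)).1 (not_not.1 ha)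
  by_cases ha : a ∈ supp S (x + y)
  · by_cases hc : c ∈ supp S (x + y)
    · exact mul_eq_mul_of_ratio_eq hx.2 hy.2 (ratio_eq_of_mem_supp hx hy hxy h0 ha hc)
    · simp [eq_zero hc]
  · simp [eq_zero ha]

end Equality

section Splitting

variable {S : Setup} {x y : V S → ℤ}

theorem mul_mul_apply_add_self_of_smul_eq {R M : Type*} [CommRing R] [AddCommGroup M] [Module R M]
    (B : LinearMap.BilinForm R M) {u v : M} {p q : R} (h : q • u = p • v) :
    p * q * B (u + v) (u + v) = (p + q) ^ 2 * B u v := by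
  have hu : p • (u + v) = (p + q) • u := by rw [smul_add, ← h, add_smul]
  have hv : q • (u + v) = (p + q) • v := by rw [smul_add, h, add_smul]
  calc p * q * B (u + v) (u + v) = B (p • (u + v)) (q • (u + v)) := by
        simp only [map_smul, LinearMap.smul_apply, smul_eq_mul]; ring
    _ = (p + q) ^ 2 * B u v := by
        rw [hu, hv]; simp only [map_smul, LinearMap.smul_apply, smul_eq_mul]; ring

/-- The symmetric form `(·,·)` as a bilinear map. -/
def bformBilin (S : Setup) : LinearMap.BilinForm ℤ (V S → ℤ) :=
  let E := Matrix.toBilin' (1 - Matrix.of fun a b => (arr S a b : ℤ))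
  E + E.flip

theorem bformBilin_apply : bformBilin S x y = bform S x y := by
  have euler (x y : V S → ℤ) :
      Matrix.toBilin' (1 - Matrix.of fun a b => (arr S a b : ℤ)) x y = eform S x y := by
    simp only [Matrix.toBilin'_apply, eform, Matrix.sub_apply, Matrix.one_apply, Matrix.of_apply,
      mul_sub, sub_mul, Finset.sum_sub_distrib, mul_ite, ite_mul, mul_one, mul_zero, zero_mul,
      Finset.sum_ite_eq, Finset.mem_univ, if_true, mul_comm (x _) (Nat.cast _)]
  simp only [bformBilin, LinearMap.add_apply, LinearMap.BilinForm.flip_apply, euler, bform]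

theorem bform_self : bform S x x = 2 * qform S x := (two_mul _).symm

theorem bform_neg_of_add_quasiFund (hx : inLpos S x) (hy : inLpos S y) (hx0 : x ≠ 0)
    (hy0 : y ≠ 0) (hxy : quasiFund S (x + y)) (hq : qform S (x + y) < 0) : bform S x y < 0 := by
  by_contra! h0
  have prop := mul_eq_mul_of_bform_nonneg hx hy hxy h0
  obtain ⟨a, ha⟩ := Function.ne_iff.1 hx0
  obtain ⟨c, hc⟩ := Function.ne_iff.1 hy0
  have hxa : 0 < x a := (hx.2 a).lt_of_ne' ha
  have hya : 0 < y a := (hy.2 a).lt_of_ne' fun hya => mul_ne_zero ha hc (by simp [prop a c, hya])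
  have hsmul : y a • x = x a • y := funext fun c => by
    simpa [mul_comm] using prop c a
  have scaled := mul_mul_apply_add_self_of_smul_eq (bformBilin S) hsmul
  rw [bformBilin_apply, bformBilin_apply, bform_self] at scaled
  nlinarith [mul_pos hxa hya, mul_nonneg (sq_nonneg (x a + y a)) h0]

theorem inLpos_sum {ι : Type*} {γ : ι → V S → ℤ} (s : Finset ι) (h : ∀ t ∈ s, inLpos S (γ t)) :
    inLpos S (∑ t ∈ s, γ t) := by
  refine Finset.sum_induction γ (inLpos S) (fun u v hu hv => ⟨fun i hi => ?_, fun a => ?_⟩)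
    ⟨fun _ _ => by simp, fun _ => le_rfl⟩ h
  · simp only [Pi.add_apply, Finset.sum_add_distrib, hu.1 i hi, hv.1 i hi]
  · exact add_nonneg (hu.2 a) (hv.2 a)

theorem two_mul_qform_sum {ι : Type*} [Fintype ι] [DecidableEq ι] (γ : ι → V S → ℤ) :
    2 * qform S (∑ t, γ t) =
      ∑ t, (2 * qform S (γ t) + bform S (γ t) (∑ s ∈ Finset.univ.erase t, γ s)) := by
  simp only [← bform_self, ← bformBilin_apply]
  rw [LinearMap.BilinForm.sum_left]
  refine Finset.sum_congr rfl fun t _ => ?_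
  rw [← map_add, Finset.add_sum_erase _ _ (Finset.mem_univ t)]

theorem sum_erase_ne_zero {ι A : Type*} [Fintype ι] [DecidableEq ι] [Nontrivial ι]
    {γ : ι → A → ℤ} (hγ : ∀ t a, 0 ≤ γ t a) (hγ0 : ∀ t, γ t ≠ 0) (t : ι) :
    ∑ s ∈ Finset.univ.erase t, γ s ≠ 0 := by
  obtain ⟨s, hst⟩ := exists_ne t
  exact fun h => hγ0 s ((Finset.sum_eq_zero_iff_of_nonneg fun s _ => hγ s).1 h s
    (Finset.mem_erase.2 ⟨hst, Finset.mem_univ s⟩))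

end Splitting

/-- Let `β ∈ F̃` with `q(β) < 0`, and suppose `β = γ₁ + ⋯ + γ_r` with `r ≥ 2` and
all `γ_t ∈ L⁺ ∖ {0}`. Then `q(β) < q(γ₁) + ⋯ + q(γ_r)`. -/
theorem statement10 (S : Setup) (β : V S → ℤ) (hβ : quasiFund S β)
    (hq : qform S β < 0) (r : ℕ) (hr : 2 ≤ r) (γ : Fin r → (V S → ℤ))
    (hγ : ∀ t, inLpos S (γ t) ∧ γ t ≠ 0) (hsum : β = ∑ t, γ t) :
    qform S β < ∑ t, qform S (γ t) := by
  have : Nontrivial (Fin r) := Fin.nontrivial_iff_two_le.2 hr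
  have cross_neg (t : Fin r) : bform S (γ t) (∑ s ∈ Finset.univ.erase t, γ s) < 0 := by
    have split : γ t + ∑ s ∈ Finset.univ.erase t, γ s = β :=
      hsum ▸ Finset.add_sum_erase _ γ (Finset.mem_univ t)
    exact bform_neg_of_add_quasiFund (hγ t).1 (inLpos_sum _ fun s _ => (hγ s).1) (hγ t).2
      (sum_erase_ne_zero (fun t => (hγ t).1.2) (fun t => (hγ t).2) t) (split ▸ hβ) (split ▸ hq)
  have expand : 2 * qform S β = ∑ t, (2 * qform S (γ t) + _) := hsum ▸ two_mul_qform_sum γ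
  have total_neg := Finset.sum_neg (fun t _ => cross_neg t) Finset.univ_nonempty
  rw [Finset.sum_add_distrib, ← Finset.mul_sum] at expand
  linarith

end

end DS
end

section
/- If β ∈ F̃ and q(β) < 0, then β is a positive root of the quiver Q. -/
open Polynomial Matrix BigOperators

namespace DS

noncomputable section

/-!
The vertices of `Q` form legs attached to base vertices, and the base vertices fall into branches;
a base vertex of the hub, branch `0`, is joined by one edge to every base vertex outside the hub.
Reflections at a leg permute the successive differences of `β` along it, so they can be used to
sort these differences without changing `β` at the base. After sorting, only base vertices can
pair positively.

Choose in every branch `i ∈ I_irr` a base vertex of maximal pairing. By the condition on the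
`ε_𝐢`, these maxima outside the hub and any one pairing at the hub have nonpositive sum. Since
each of these branches has the same base sum as the hub, one reflection at a base vertex outside
the hub makes all pairings of its branch nonpositive, and raises those at the hub by no more than
the hub can absorb. Once no pairing outside the hub is positive, a pairing at the hub can be
positive only if exactly one branch `r` has not been reflected. One reflection then repairs the
hub, and by comparing base sums at most one further reflection, outside the hub and `r`, is
needed.

The support is connected because hub and non-hub form a complete bipartite graph. If the support
misses one side, it lies in a single branch, where the degrees of the `q_j - q_j'` are
ultrametric, so that every neighbour of a base vertex is adjacent to all base vertices not
adjacent to it.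
-/

/-! ### Hub graphs -/

/-- A graph whose base vertices are distributed over branches, one of which is the hub: base
vertices `b`, `c` of one branch are joined by `mult b c` edges, base vertices of which exactly one
lies in the hub by one edge, and a leg of `len b` further vertices is attached to each base vertex
`b`. The field `mult_ultra` is what remains of the ultrametric inequality for the degrees `deg
(q_j - q_j')`. -/
structure HubGraph (B ι : Type*) where
  branch : B → ι
  hub : ι
  mult : B → B → ℕ
  len : B → ℕ
  mult_self : ∀ b, mult b b = 0
  mult_comm : ∀ b c, mult b c = mult c b
  mult_eq_zero : ∀ {b c}, branch b ≠ branch c → mult b c = 0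
  mult_ultra : ∀ {a b c}, branch b = branch c → mult b c = 0 → 0 < mult b a → 0 < mult a c

namespace HubGraph

section Legs

variable {B ι : Type*} (G : HubGraph B ι)

/-- The vertices: `⟨b, 0⟩` is the base vertex `b` itself, `⟨b, k⟩` with `0 < k` lies on its leg. -/
abbrev Vertex := Σ b : B, Fin (G.len b + 1)

/-- The base vertex `b`, as a vertex of the graph. -/
def base (b : B) : G.Vertex := ⟨b, 0⟩

variable {G} {γ : G.Vertex → ℤ} {b : B} {k : ℕ}

/-- The value of `γ` at the `k`-th vertex of the leg at `b`, extended by `0` beyond its end. -/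
def entry (γ : G.Vertex → ℤ) (b : B) (k : ℕ) : ℤ :=
  if h : k < G.len b + 1 then γ ⟨b, k, h⟩ else 0

/-- The successive differences along the leg at `b`; the reflections at the leg permute them. -/
def drop (γ : G.Vertex → ℤ) (b : B) (k : ℕ) : ℤ := entry γ b k - entry γ b (k + 1)

/-- The values of `γ` do not increase along any leg. -/
def LegAntitone (γ : G.Vertex → ℤ) : Prop := ∀ b, Antitone (entry γ b)

theorem entry_coe (γ : G.Vertex → ℤ) (b : B) (k : Fin (G.len b + 1)) :
    entry γ b k = γ ⟨b, k⟩ :=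
  dif_pos k.isLt

theorem entry_eq_zero (γ : G.Vertex → ℤ) (h : G.len b < k) : entry γ b k = 0 :=
  dif_neg (by lia)

theorem sum_ite_val_eq (γ : G.Vertex → ℤ) (b : B) (k : ℕ) :
    ∑ l : Fin (G.len b + 1), (if (l : ℕ) = k then γ ⟨b, l⟩ else 0) = entry γ b k := by
  unfold entry
  split_ifs with hk
  · rw [Finset.sum_eq_single_of_mem ⟨k, hk⟩ (Finset.mem_univ _)]
    · simp
    · exact fun l _ hl => if_neg fun h => hl (Fin.ext h)
  · exact Finset.sum_eq_zero fun l _ => if_neg (by lia)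

theorem entry_nonneg (h : 0 ≤ γ) (b : B) (k : ℕ) : 0 ≤ entry γ b k := by
  unfold entry
  split_ifs
  exacts [h _, le_rfl]

theorem legAntitone_iff : LegAntitone γ ↔ ∀ b k, 0 ≤ drop γ b k := by
  simp only [LegAntitone, drop, sub_nonneg]
  exact forall_congr' fun b => ⟨fun h k => h k.le_succ, antitone_nat_of_succ_le⟩

namespace LegAntitone

theorem drop_nonneg (h : LegAntitone γ) (b : B) (k : ℕ) : 0 ≤ drop γ b k :=
  legAntitone_iff.1 h b k

theorem entry_nonneg (h : LegAntitone γ) (b : B) (k : ℕ) : 0 ≤ entry γ b k := by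
  rw [← entry_eq_zero γ (b := b) (k := G.len b + 1 + k) (by lia)]
  exact h b (by lia)

theorem nonneg (h : LegAntitone γ) : 0 ≤ γ := fun ⟨b, k⟩ => by
  simpa only [entry_coe, Pi.zero_apply] using h.entry_nonneg b k

theorem drop_le_entry (h : LegAntitone γ) (b : B) (k : ℕ) : drop γ b k ≤ entry γ b k :=
  sub_le_self _ (h.entry_nonneg b (k + 1))

end LegAntitone

end Legs

section BaseSums

variable {B ι : Type*} [Fintype B] {G : HubGraph B ι} {γ : G.Vertex → ℤ} {b : B}

/-- The sum of `γ` over the base vertices in the branch of `b`, weighted by their numbers of edges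
to `b`. -/
def intra (γ : G.Vertex → ℤ) (b : B) : ℤ := ∑ c, (G.mult b c : ℤ) * entry γ c 0

theorem LegAntitone.intra_nonneg (h : LegAntitone γ) (b : B) : 0 ≤ intra γ b :=
  Finset.sum_nonneg fun c _ => mul_nonneg (Nat.cast_nonneg _) (h.entry_nonneg c 0)

variable [DecidableEq ι]

/-- The sum of `γ` over the base vertices of branch `i`. -/
def branchSum (γ : G.Vertex → ℤ) (i : ι) : ℤ := ∑ b with G.branch b = i, entry γ b 0

/-- The sum of `γ` over the base vertices outside the hub. -/
def outerSum (γ : G.Vertex → ℤ) : ℤ := ∑ b with G.branch b ≠ G.hub, entry γ b 0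

/-- The sum of `γ` over the neighbours of `b` among the base vertices of other branches. -/
def opposite (γ : G.Vertex → ℤ) (b : B) : ℤ :=
  if G.branch b = G.hub then outerSum γ else branchSum γ G.hub

theorem LegAntitone.sum_entry_le_branchSum (h : LegAntitone γ) {i : ι} {s : Finset B}
    (hs : ∀ b ∈ s, G.branch b = i) : ∑ b ∈ s, entry γ b 0 ≤ branchSum γ i :=
  Finset.sum_le_sum_of_subset_of_nonneg (fun b hb => by simpa using hs b hb)
    fun b _ _ => h.entry_nonneg b 0

theorem LegAntitone.entry_le_branchSum (h : LegAntitone γ) (b : B) :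
    entry γ b 0 ≤ branchSum γ (G.branch b) := by
  simpa using h.sum_entry_le_branchSum (s := {b}) (i := G.branch b) (by simp)

theorem LegAntitone.sum_branchSum_le_outerSum (h : LegAntitone γ) {s : Finset ι}
    (hs : G.hub ∉ s) : ∑ i ∈ s, branchSum γ i ≤ outerSum γ := by
  have hsum : ∑ i ∈ s, branchSum γ i = ∑ b with G.branch b ∈ s, entry γ b 0 := by
    rw [← Finset.sum_fiberwise_of_maps_to (t := s) (g := G.branch) (by simp)]
    refine Finset.sum_congr rfl fun i hi => Finset.sum_congr ?_ fun _ _ => rfl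
    ext b
    simp only [Finset.mem_filter, Finset.mem_univ, true_and]
    exact ⟨fun hb => ⟨hb ▸ hi, hb⟩, And.right⟩
  rw [hsum]
  refine Finset.sum_le_sum_of_subset_of_nonneg (fun b hb => ?_) fun b _ _ => h.entry_nonneg b 0
  simp only [Finset.mem_filter, Finset.mem_univ, true_and] at hb ⊢
  exact fun hhub => hs (hhub ▸ hb)

theorem exists_ne_zero_of_opposite_ne_zero (h : opposite γ b ≠ 0) :
    ∃ d, (G.branch b = G.hub ↔ G.branch d ≠ G.hub) ∧ γ (G.base d) ≠ 0 := by
  unfold opposite at h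
  split_ifs at h with hb
  all_goals
    obtain ⟨d, hd, hne⟩ := Finset.exists_ne_zero_of_sum_ne_zero h
    exact ⟨d, by simpa [hb] using hd, hne⟩

end BaseSums

section Reflections

variable {B ι : Type*} [DecidableEq B] [DecidableEq ι] (G : HubGraph B ι)

/-- The number of edges between two vertices. -/
def adj (x y : G.Vertex) : ℕ :=
  (if (x.2 : ℕ) = 0 ∧ (y.2 : ℕ) = 0 then
    G.mult x.1 y.1 + if G.branch x.1 = G.hub ↔ G.branch y.1 ≠ G.hub then 1 else 0 else 0) +
  if x.1 = y.1 ∧ ((x.2 : ℕ) = y.2 + 1 ∨ (y.2 : ℕ) = x.2 + 1) then 1 else 0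

theorem adj_self (x : G.Vertex) : G.adj x x = 0 := by
  simp [adj, G.mult_self]

theorem adj_comm (x y : G.Vertex) : G.adj x y = G.adj y x := by
  simp only [adj, G.mult_comm x.1 y.1, and_comm, or_comm, eq_comm (a := x.1)]
  congr! 4
  tauto

variable [Fintype B] {G} {γ : G.Vertex → ℤ}

/-- The value `(γ, ε_x)` of the symmetric bilinear form of the graph. -/
def pairing (γ : G.Vertex → ℤ) (x : G.Vertex) : ℤ := 2 * γ x - ∑ y, (G.adj x y : ℤ) * γ y

/-- The fundamental reflection at `x`. -/
def reflect (x : G.Vertex) (γ : G.Vertex → ℤ) : G.Vertex → ℤ := γ - Pi.single x (pairing γ x)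

/-- `γ'` is obtained from `γ` by finitely many fundamental reflections. -/
def Reaches : (G.Vertex → ℤ) → (G.Vertex → ℤ) → Prop :=
  Relation.ReflTransGen fun γ γ' => ∃ x, γ' = reflect x γ

theorem reflect_reflect (x : G.Vertex) (γ : G.Vertex → ℤ) : reflect x (reflect x γ) = γ := by
  have hadj : ∑ y, (G.adj x y : ℤ) * reflect x γ y = ∑ y, (G.adj x y : ℤ) * γ y := by
    refine Finset.sum_congr rfl fun y _ => ?_
    obtain rfl | hy := eq_or_ne x y
    · simp [adj_self]
    · simp [reflect, hy.symm]
  have hpairing : pairing (reflect x γ) x = -pairing γ x := by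
    rw [pairing, hadj]
    simp only [reflect, pairing, Pi.sub_apply, Pi.single_eq_same]
    ring
  rw [reflect, hpairing, Pi.single_neg, reflect]
  abel

theorem Reaches.eq_zero (h : Reaches γ 0) : γ = 0 := by
  induction h using Relation.ReflTransGen.head_induction_on with
  | refl => rfl
  | @head γ _ hstep _ ih =>
    obtain ⟨x, rfl⟩ := hstep
    rw [← reflect_reflect x γ, ih]
    simp [reflect, pairing]

theorem sum_reflect (x : G.Vertex) (γ : G.Vertex → ℤ) :
    ∑ y, reflect x γ y = ∑ y, γ y - pairing γ x := by
  simp [reflect, Finset.sum_sub_distrib]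

theorem entry_reflect (b : B) (k : Fin (G.len b + 1)) (c : B) (l : ℕ) :
    entry (reflect ⟨b, k⟩ γ) c l =
      entry γ c l - if c = b ∧ l = k then pairing γ ⟨b, k⟩ else 0 := by
  unfold entry
  split_ifs with hl h
  · obtain ⟨rfl, rfl⟩ := h
    simp [reflect]
  · have hne : (⟨c, l, hl⟩ : G.Vertex) ≠ ⟨b, k⟩ := by
      rintro ⟨⟩
      exact h ⟨rfl, rfl⟩
    simp [reflect, hne]
  · obtain ⟨rfl, rfl⟩ := ‹c = b ∧ l = k›
    exact absurd k.isLt hl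
  · rw [sub_zero]

theorem pairing_base (γ : G.Vertex → ℤ) (b : B) :
    pairing γ (G.base b) = entry γ b 0 + drop γ b 0 - opposite γ b - intra γ b := by
  have hadj : ∀ c (l : Fin (G.len c + 1)), (G.adj (G.base b) ⟨c, l⟩ : ℤ) * γ ⟨c, l⟩ =
      (G.mult b c + if G.branch b = G.hub ↔ G.branch c ≠ G.hub then 1 else 0) *
        (if (l : ℕ) = 0 then γ ⟨c, l⟩ else 0) +
      if b = c then (if (l : ℕ) = 1 then γ ⟨c, l⟩ else 0) else 0 := by
    intro c l
    simp only [adj, base, Fin.val_zero]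
    push_cast
    split_ifs <;> lia
  have hopposite : opposite γ b =
      ∑ c, if G.branch b = G.hub ↔ G.branch c ≠ G.hub then entry γ c 0 else 0 := by
    unfold opposite outerSum branchSum
    split_ifs with hb <;> simp [hb, Finset.sum_filter]
  have hbase : γ (G.base b) = entry γ b 0 := (entry_coe γ b 0).symm
  simp only [pairing, Fintype.sum_sigma, hadj, Finset.sum_add_distrib, ← Finset.mul_sum, hbase,
    Finset.sum_ite_irrel, sum_ite_val_eq, add_mul, ite_mul, one_mul, zero_mul,
    Finset.sum_const_zero, Finset.sum_ite_eq, Finset.mem_univ, if_true, drop, hopposite, intra]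
  ring

theorem pairing_succ (γ : G.Vertex → ℤ) {b : B} (k : Fin (G.len b)) :
    pairing γ ⟨b, k.succ⟩ = drop γ b (k + 1) - drop γ b k := by
  have hadj : ∀ c (l : Fin (G.len c + 1)), (G.adj ⟨b, k.succ⟩ ⟨c, l⟩ : ℤ) * γ ⟨c, l⟩ =
      if b = c then (if (l : ℕ) = k then γ ⟨c, l⟩ else 0) +
        (if (l : ℕ) = k + 2 then γ ⟨c, l⟩ else 0) else 0 := by
    intro c l
    simp only [adj, Fin.val_succ]
    push_cast
    split_ifs <;> lia
  have hvertex : γ ⟨b, k.succ⟩ = entry γ b (k + 1) := (entry_coe γ b k.succ).symm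
  simp only [pairing, Fintype.sum_sigma, hadj, hvertex, Finset.sum_ite_irrel,
    Finset.sum_add_distrib, sum_ite_val_eq, Finset.sum_const_zero, Finset.sum_ite_eq,
    Finset.mem_univ, if_true, drop]
  ring

end Reflections

section Sorting

variable {B ι : Type*} {G : HubGraph B ι} [DecidableEq B] [DecidableEq ι] [Fintype B]
  {γ : G.Vertex → ℤ} {b : B} {k l : ℕ}

/-- `γ` pairs nonpositively with every vertex on a leg. -/
def LegSorted (γ : G.Vertex → ℤ) : Prop := ∀ b (k : Fin (G.len b)), pairing γ ⟨b, k.succ⟩ ≤ 0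

theorem legSorted_iff :
    LegSorted γ ↔ ∀ b k, k < G.len b → drop γ b (k + 1) ≤ drop γ b k := by
  refine forall_congr' fun b => ⟨fun h k hk => ?_, fun h k => ?_⟩
  · exact sub_nonpos.1 (pairing_succ γ ⟨k, hk⟩ ▸ h ⟨k, hk⟩)
  · exact (pairing_succ γ k).trans_le (sub_nonpos.2 (h k k.isLt))

namespace LegSorted

theorem drop_le_drop (h : LegSorted γ) (hkl : k ≤ l) (hl : l ≤ G.len b) :
    drop γ b l ≤ drop γ b k := by
  induction l, hkl using Nat.le_induction with
  | base => rfl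
  | succ l _ ih => exact (legSorted_iff.1 h b l hl).trans (ih (by lia))

theorem legAntitone (h : LegSorted γ) (hγ : 0 ≤ γ) : LegAntitone γ := by
  refine legAntitone_iff.2 fun b k => ?_
  obtain hk | hk := le_or_gt k (G.len b)
  · refine le_trans ?_ (h.drop_le_drop hk le_rfl)
    rw [drop, entry_eq_zero γ (Nat.lt_succ_self _), sub_zero]
    exact entry_nonneg hγ b _
  · rw [drop, entry_eq_zero γ hk, entry_eq_zero γ (by lia), sub_zero]

theorem drop_le_drop_zero (h : LegSorted γ) (hγ : LegAntitone γ) (b : B) (k : ℕ) :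
    drop γ b k ≤ drop γ b 0 := by
  obtain hk | hk := le_or_gt k (G.len b)
  · exact h.drop_le_drop k.zero_le hk
  · rw [drop, entry_eq_zero γ hk, entry_eq_zero γ (by lia), sub_zero]
    exact hγ.drop_nonneg b 0

end LegSorted

theorem drop_reflect_succ (γ : G.Vertex → ℤ) (b : B) (k : Fin (G.len b)) (c : B) :
    drop (reflect ⟨b, k.succ⟩ γ) c =
      if c = b then drop γ c ∘ Equiv.swap (k : ℕ) (k + 1) else drop γ c := by
  ext l
  rw [drop, entry_reflect, entry_reflect, pairing_succ]
  obtain rfl | hcb := eq_or_ne c b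
  · simp only [Fin.val_succ, true_and, if_true, Function.comp_apply, Equiv.swap_apply_def]
    split_ifs <;> simp only [drop] <;> grind
  · simp [hcb, drop]

theorem exists_reaches_legSorted (h : LegAntitone γ) :
    ∃ γ', Reaches γ γ' ∧ LegAntitone γ' ∧ LegSorted γ' ∧ (∀ b, entry γ' b 0 = entry γ b 0) ∧
      ∀ b, Set.range (drop γ' b) = Set.range (drop γ b) := by
  induction hn : (∑ x, γ x).toNat using Nat.strong_induction_on generalizing γ with
  | _ n ih =>
  by_cases hsorted : LegSorted γ
  · exact ⟨γ, .refl, h, hsorted, fun _ => rfl, fun _ => rfl⟩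
  obtain ⟨b, k, hpos⟩ : ∃ b k, 0 < pairing γ ⟨b, Fin.succ k⟩ := by
    simpa only [LegSorted, not_forall, not_le] using hsorted
  set γ₁ := reflect ⟨b, k.succ⟩ γ with hγ₁
  have hrange : ∀ c, Set.range (drop γ₁ c) = Set.range (drop γ c) := fun c => by
    rw [hγ₁, drop_reflect_succ]
    split_ifs
    · exact EquivLike.range_comp _ _
    · rfl
  have hanti : LegAntitone γ₁ := legAntitone_iff.2 fun c l => by
    obtain ⟨m, hm⟩ := (hrange c).subset ⟨l, rfl⟩
    exact hm ▸ h.drop_nonneg c m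
  have hsum : (∑ x, γ₁ x).toNat < n := by
    have hnonneg : 0 ≤ ∑ x, γ₁ x := Finset.sum_nonneg fun x _ => hanti.nonneg x
    have := sum_reflect ⟨b, k.succ⟩ γ
    lia
  obtain ⟨γ', hreach, hanti', hsorted', hentry, hrange'⟩ := ih _ hsum hanti rfl
  refine ⟨γ', .head ⟨_, rfl⟩ hreach, hanti', hsorted', fun c => ?_, fun c => ?_⟩
  · rw [hentry, entry_reflect, if_neg (by simp), sub_zero]
  · rw [hrange', hrange]

end Sorting

section BaseMoves

variable {B ι : Type*} {G : HubGraph B ι} [DecidableEq B] [DecidableEq ι] [Fintype B]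
  {γ γ' : G.Vertex → ℤ} {b c : B}

/-- What the descent needs to know of the vector `γ'` obtained from `γ` by the reflection at the
base vertex `b` followed by reflections sorting the legs. -/
structure BaseMove (γ : G.Vertex → ℤ) (b : B) (γ' : G.Vertex → ℤ) : Prop where
  reaches : Reaches γ γ'
  legAntitone : LegAntitone γ'
  legSorted : LegSorted γ'
  entry_zero : ∀ c, entry γ' c 0 = entry γ c 0 - if c = b then pairing γ (G.base b) else 0
  drop_le : ∀ c, drop γ' c 0 ≤ drop γ c 0
  drop_self : drop γ' b 0 = drop γ b 0 - pairing γ (G.base b) ∨ drop γ' b 0 ≤ entry γ b 1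

theorem exists_baseMove (h : LegAntitone γ) (hsorted : LegSorted γ)
    (hpos : 0 < pairing γ (G.base b)) (hle : branchSum γ (G.branch b) ≤ opposite γ b) :
    ∃ γ', BaseMove γ b γ' := by
  set γ₁ := reflect (G.base b) γ with hγ₁
  have hentry : ∀ c l, entry γ₁ c l =
      entry γ c l - if c = b ∧ l = 0 then pairing γ (G.base b) else 0 :=
    entry_reflect b 0
  have hdrop : ∀ c l, drop γ₁ c l =
      drop γ c l - if c = b ∧ l = 0 then pairing γ (G.base b) else 0 := fun c l => by
    have hl : ¬(c = b ∧ l + 1 = 0) := by simp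
    rw [drop, hentry, hentry, if_neg hl, drop]
    ring
  have hanti : LegAntitone γ₁ := legAntitone_iff.2 fun c l => by
    rw [hdrop]
    split_ifs with hcl
    · obtain ⟨rfl, rfl⟩ := hcl
      linarith [pairing_base γ c, h.intra_nonneg c, h.entry_le_branchSum c]
    · simpa using h.drop_nonneg c l
  obtain ⟨γ', hreach, hanti', hsorted', hentry', hrange⟩ := exists_reaches_legSorted hanti
  have hdrop' : ∀ c, ∃ m, drop γ₁ c m = drop γ' c 0 := fun c => (hrange c).subset ⟨0, rfl⟩
  refine ⟨γ', .head ⟨_, rfl⟩ hreach, hanti', hsorted', fun c => ?_, fun c => ?_, ?_⟩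
  · simp [hentry', hentry]
  · obtain ⟨m, hm⟩ := hdrop' c
    rw [← hm, hdrop]
    split_ifs
    · linarith [hsorted.drop_le_drop_zero h c m]
    · linarith [hsorted.drop_le_drop_zero h c m]
  · obtain ⟨_ | m, hm⟩ := hdrop' b
    · left
      simp [← hm, hdrop]
    · right
      rw [← hm, hdrop, if_neg (by lia), sub_zero]
      exact (h.drop_le_entry b _).trans (h b (by lia))

namespace BaseMove

theorem sum_mul_entry_zero (h : BaseMove γ b γ') (w : B → ℤ) :
    ∑ c, w c * entry γ' c 0 = ∑ c, w c * entry γ c 0 - w b * pairing γ (G.base b) := by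
  simp [h.entry_zero, mul_sub, Finset.sum_sub_distrib]

theorem branchSum_eq (h : BaseMove γ b γ') (i : ι) :
    branchSum γ' i = branchSum γ i - if G.branch b = i then pairing γ (G.base b) else 0 := by
  simpa [branchSum, Finset.sum_filter] using
    h.sum_mul_entry_zero fun c => if G.branch c = i then 1 else 0

theorem outerSum_eq (h : BaseMove γ b γ') :
    outerSum γ' = outerSum γ - if G.branch b ≠ G.hub then pairing γ (G.base b) else 0 := by
  simpa only [outerSum, Finset.sum_filter, ite_mul, one_mul, zero_mul] using
    h.sum_mul_entry_zero fun c => if G.branch c ≠ G.hub then 1 else 0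

theorem opposite_eq (h : BaseMove γ b γ') (c : B) :
    opposite γ' c = opposite γ c -
      if G.branch c = G.hub ↔ G.branch b ≠ G.hub then pairing γ (G.base b) else 0 := by
  unfold opposite
  split_ifs <;> simp_all [h.outerSum_eq, h.branchSum_eq]

theorem intra_eq (h : BaseMove γ b γ') (c : B) :
    intra γ' c = intra γ c - G.mult c b * pairing γ (G.base b) :=
  h.sum_mul_entry_zero _

theorem pairing_self (h : BaseMove γ b γ') :
    pairing γ' (G.base b) = drop γ' b 0 - drop γ b 0 := by
  rw [pairing_base, h.entry_zero, if_pos rfl, h.opposite_eq, if_neg (by tauto), h.intra_eq,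
    G.mult_self, pairing_base]
  ring

theorem pairing_self_nonpos (h : BaseMove γ b γ') : pairing γ' (G.base b) ≤ 0 :=
  h.pairing_self.trans_le (sub_nonpos.2 (h.drop_le b))

theorem pairing_le_of_branch_ne (h : BaseMove γ b γ') (hc : G.branch c ≠ G.branch b) :
    pairing γ' (G.base c) ≤ pairing γ (G.base c) +
      if G.branch c = G.hub ↔ G.branch b ≠ G.hub then pairing γ (G.base b) else 0 := by
  rw [pairing_base, pairing_base γ c, h.entry_zero, h.opposite_eq, h.intra_eq, G.mult_eq_zero hc,
    if_neg fun hcb => hc (congrArg G.branch hcb), Nat.cast_zero]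
  linarith [h.drop_le c]

theorem pairing_le_of_branch_eq (h : BaseMove γ b γ') (hγ : LegAntitone γ)
    (hc : G.branch c = G.branch b) (hcb : c ≠ b) :
    pairing γ' (G.base c) ≤
      2 * (branchSum γ (G.branch b) - opposite γ b) - pairing γ (G.base b) := by
  have hsum : entry γ c 0 + entry γ b 0 ≤ branchSum γ (G.branch b) := by
    rw [← Finset.sum_pair (f := fun d => entry γ d 0) hcb]
    exact hγ.sum_entry_le_branchSum (by simp [hc])
  have hopp : opposite γ' c = opposite γ b := by
    rw [h.opposite_eq, if_neg (by rw [hc]; tauto), sub_zero, opposite, opposite, hc]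
  have hentry : entry γ' c 0 = entry γ c 0 := by rw [h.entry_zero, if_neg hcb, sub_zero]
  linarith [pairing_base γ' c, pairing_base γ b, h.legAntitone.intra_nonneg c, hγ.intra_nonneg b,
    h.legAntitone.drop_le_entry c 0, hγ.drop_le_entry b 0]

end BaseMove

end BaseMoves

/-! ### Descent into the fundamental set -/

section Fundamental

variable {B ι : Type*} {G : HubGraph B ι} [DecidableEq B] [DecidableEq ι]
  {γ : G.Vertex → ℤ} {b c : B}

/-- Connectedness within the support of `γ`. -/
def Linked (γ : G.Vertex → ℤ) : G.Vertex → G.Vertex → Prop :=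
  Relation.ReflTransGen fun x y => 0 < G.adj x y ∧ γ x ≠ 0 ∧ γ y ≠ 0

namespace Linked

theorem symm {x y : G.Vertex} (h : Linked γ x y) : Linked γ y x :=
  have : Std.Symm fun x y => 0 < G.adj x y ∧ γ x ≠ 0 ∧ γ y ≠ 0 :=
    ⟨fun x y ⟨hxy, hx, hy⟩ => ⟨G.adj_comm x y ▸ hxy, hy, hx⟩⟩
  Relation.ReflTransGen.stdSymm.symm _ _ h

theorem of_adj {x y : G.Vertex} (h : 0 < G.adj x y) (hx : γ x ≠ 0) (hy : γ y ≠ 0) :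
    Linked γ x y :=
  .single ⟨h, hx, hy⟩

theorem of_mult_pos (h : 0 < G.mult b c) (hb : γ (G.base b) ≠ 0) (hc : γ (G.base c) ≠ 0) :
    Linked γ (G.base b) (G.base c) :=
  .of_adj (by simp only [adj, base, Fin.val_zero, and_self, if_true]; lia) hb hc

theorem of_hub_iff (h : G.branch b = G.hub ↔ G.branch c ≠ G.hub) (hb : γ (G.base b) ≠ 0)
    (hc : γ (G.base c) ≠ 0) : Linked γ (G.base b) (G.base c) :=
  .of_adj (by simp only [adj, base, Fin.val_zero, and_self, if_true]; lia) hb hc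

end Linked

theorem LegAntitone.linked_base (h : LegAntitone γ) {k : Fin (G.len b + 1)} (hk : γ ⟨b, k⟩ ≠ 0) :
    γ (G.base b) ≠ 0 ∧ Linked γ ⟨b, k⟩ (G.base b) := by
  induction k using Fin.induction with
  | zero => exact ⟨hk, .refl⟩
  | succ k ih =>
    have hle : γ ⟨b, k.succ⟩ ≤ γ ⟨b, k.castSucc⟩ := by
      simpa only [entry_coe] using
        h b (show ((k.castSucc : Fin _) : ℕ) ≤ (k.succ : Fin _) from Nat.le_succ k)
    have hpos : 0 < γ ⟨b, k.succ⟩ := (h.nonneg _).lt_of_ne' hk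
    obtain ⟨hb, hlinked⟩ := ih (hpos.trans_le hle).ne'
    exact ⟨hb, .head ⟨by simp [adj], hk, (hpos.trans_le hle).ne'⟩ hlinked⟩

variable [Fintype B]

/-- `γ` belongs to the fundamental set of the graph. -/
structure IsFundamental (γ : G.Vertex → ℤ) : Prop where
  ne_zero : γ ≠ 0
  nonneg : 0 ≤ γ
  linked : ∀ x y, γ x ≠ 0 → γ y ≠ 0 → Linked γ x y
  pairing_nonpos : ∀ x, pairing γ x ≤ 0

theorem LegAntitone.pairing_base_le (h : LegAntitone γ) (b : B) :
    pairing γ (G.base b) ≤ 2 * entry γ b 0 - entry γ b 1 - opposite γ b := by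
  have hdrop : drop γ b 0 = entry γ b 0 - entry γ b 1 := rfl
  linarith [pairing_base γ b, h.intra_nonneg b]

theorem LegAntitone.linked_of_opposite_eq_zero (h : LegAntitone γ) (hopp : opposite γ b = 0)
    (hpair : pairing γ (G.base b) ≤ 0) (hbc : G.branch b = G.branch c)
    (hb : γ (G.base b) ≠ 0) (hc : γ (G.base c) ≠ 0) : Linked γ (G.base b) (G.base c) := by
  obtain hmult | hmult := Nat.eq_zero_or_pos (G.mult b c)
  · have hintra : intra γ b ≠ 0 := by
      have hentry : 0 < entry γ b 0 := (h.nonneg _).lt_of_ne' hb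
      linarith [pairing_base γ b, h.drop_nonneg b 0]
    obtain ⟨d, -, hd⟩ := Finset.exists_ne_zero_of_sum_ne_zero hintra
    obtain ⟨hbd, hd⟩ := mul_ne_zero_iff.1 hd
    have hbd : 0 < G.mult b d := Nat.pos_of_ne_zero (Nat.cast_ne_zero.1 hbd)
    have hdc : 0 < G.mult d c := G.mult_ultra hbc hmult hbd
    exact (Linked.of_mult_pos hbd hb hd).trans (Linked.of_mult_pos hdc hd hc)
  · exact .of_mult_pos hmult hb hc

theorem LegAntitone.isFundamental (h : LegAntitone γ) (hsorted : LegSorted γ) (hne : γ ≠ 0)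
    (hbase : ∀ b, pairing γ (G.base b) ≤ 0)
    (hcenter : branchSum γ G.hub = 0 → ∃ r, ∀ b, G.branch b ≠ r → entry γ b 0 = 0) :
    IsFundamental γ where
  ne_zero := hne
  nonneg := h.nonneg
  pairing_nonpos := fun ⟨b, k⟩ => Fin.cases (hbase b) (hsorted b) k
  linked := by
    rintro ⟨b, k⟩ ⟨c, l⟩ hx hy
    obtain ⟨hb, hbk⟩ := h.linked_base hx
    obtain ⟨hc, hcl⟩ := h.linked_base hy
    suffices Linked γ (G.base b) (G.base c) from (hbk.trans this).trans hcl.symm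
    by_cases hbc : G.branch b = G.hub ↔ G.branch c ≠ G.hub
    · exact .of_hub_iff hbc hb hc
    by_cases hopp : opposite γ b = 0
    · refine h.linked_of_opposite_eq_zero hopp (hbase b) ?_ hb hc
      by_cases hhub : G.branch b = G.hub
      · rw [hhub]
        tauto
      · obtain ⟨r, hr⟩ := hcenter (by rwa [opposite, if_neg hhub] at hopp)
        exact (not_not.1 fun h => hb (hr b h)).trans (not_not.1 fun h => hc (hr c h)).symm
    · obtain ⟨d, hbd, hd⟩ := exists_ne_zero_of_opposite_ne_zero hopp
      exact (Linked.of_hub_iff hbd hb hd).trans (Linked.of_hub_iff (by tauto) hd hc)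

end Fundamental

section Descent

variable {B ι : Type*} {G : HubGraph B ι} [DecidableEq B] [DecidableEq ι] [Fintype B]
  {γ γ' : G.Vertex → ℤ} {b c : B} {r : ι} {U : Finset ι} {a : ι → ℤ}

/-- The invariant of the descent through the branches that are not the hub. The branches in `U`
are those where no reflection has been made yet; `a i` bounds the pairings there, and the hub can
absorb all these bounds. -/
structure QuasiFundamental (U : Finset ι) (a : ι → ℤ) (γ : G.Vertex → ℤ) : Prop where
  legAntitone : LegAntitone γ
  legSorted : LegSorted γ
  hub_notMem : G.hub ∉ U
  branchSum_hub_pos : 0 < branchSum γ G.hub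
  branchSum_eq : ∀ i ∈ U, branchSum γ i = branchSum γ G.hub
  pairing_nonpos : ∀ b, G.branch b ≠ G.hub → G.branch b ∉ U → pairing γ (G.base b) ≤ 0
  pairing_le : ∀ b, G.branch b ∈ U → pairing γ (G.base b) ≤ a (G.branch b)
  pairing_hub_add_le : ∀ b, G.branch b = G.hub → pairing γ (G.base b) + ∑ i ∈ U, a i ≤ 0

theorem QuasiFundamental.exists_erase (h : QuasiFundamental U a γ) (hb : G.branch b ∈ U)
    (hpos : 0 < pairing γ (G.base b)) :
    ∃ γ', Reaches γ γ' ∧ QuasiFundamental (U.erase (G.branch b)) a γ' := by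
  have hhub : G.branch b ≠ G.hub := fun hb' => h.hub_notMem (hb' ▸ hb)
  have hopp : opposite γ b = branchSum γ (G.branch b) := by
    rw [opposite, if_neg hhub, h.branchSum_eq _ hb]
  obtain ⟨γ', hmove⟩ := exists_baseMove h.legAntitone h.legSorted hpos hopp.ge
  have hbranchSum : ∀ i ≠ G.branch b, branchSum γ' i = branchSum γ i := fun i hi => by
    rw [hmove.branchSum_eq, if_neg hi.symm, sub_zero]
  have hother : ∀ c, G.branch c ≠ G.branch b → G.branch c ≠ G.hub →
      pairing γ' (G.base c) ≤ pairing γ (G.base c) := fun c hcb hc => by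
    simpa [hc, hhub] using hmove.pairing_le_of_branch_ne hcb
  refine ⟨γ', hmove.reaches, hmove.legAntitone, hmove.legSorted, ?_, ?_, ?_, ?_, ?_, ?_⟩
  · exact fun hmem => h.hub_notMem (Finset.mem_of_mem_erase hmem)
  · exact hbranchSum _ hhub.symm ▸ h.branchSum_hub_pos
  · intro i hi
    rw [hbranchSum i (Finset.ne_of_mem_erase hi), hbranchSum _ hhub.symm]
    exact h.branchSum_eq i (Finset.mem_of_mem_erase hi)
  · intro c hc hcU
    obtain hcb | hcb := eq_or_ne (G.branch c) (G.branch b)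
    · obtain rfl | hne := eq_or_ne c b
      · exact hmove.pairing_self_nonpos
      · linarith [hmove.pairing_le_of_branch_eq h.legAntitone hcb hne]
    · exact (hother c hcb hc).trans
        (h.pairing_nonpos c hc fun hmem => hcU (Finset.mem_erase.2 ⟨hcb, hmem⟩))
  · intro c hcU
    have hc : G.branch c ∈ U := Finset.mem_of_mem_erase hcU
    exact (hother c (Finset.ne_of_mem_erase hcU) fun hc' => h.hub_notMem (hc' ▸ hc)).trans
      (h.pairing_le c hc)
  · intro c hc
    have hle := hmove.pairing_le_of_branch_ne (c := c) (hc ▸ hhub.symm)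
    rw [if_pos (by tauto)] at hle
    linarith [h.pairing_hub_add_le c hc, h.pairing_le b hb, Finset.sum_erase_eq_sub (f := a) hb]

theorem QuasiFundamental.exists_outer_pairing_nonpos (h : QuasiFundamental U a γ) :
    ∃ V γ', Reaches γ γ' ∧ QuasiFundamental V a γ' ∧
      ∀ b, G.branch b ≠ G.hub → pairing γ' (G.base b) ≤ 0 := by
  induction U using Finset.strongInduction generalizing γ with
  | H U ih =>
  by_cases hle : ∀ b, G.branch b ≠ G.hub → pairing γ (G.base b) ≤ 0
  · exact ⟨U, γ, .refl, h, hle⟩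
  push Not at hle
  obtain ⟨b, hb, hpos⟩ := hle
  have hbU : G.branch b ∈ U := by
    by_contra hbU
    exact hpos.not_ge (h.pairing_nonpos b hb hbU)
  obtain ⟨γ₁, hreach, h₁⟩ := h.exists_erase hbU hpos
  obtain ⟨V, γ', hreach', h', hle'⟩ := ih _ (Finset.erase_ssubset hbU) h₁
  exact ⟨V, γ', hreach.trans hreach', h', hle'⟩

theorem QuasiFundamental.exists_branch_of_hub_pairing_pos (h : QuasiFundamental U a γ)
    (hb : G.branch b = G.hub) (hpos : 0 < pairing γ (G.base b)) :
    ∃ r, r ≠ G.hub ∧ branchSum γ r = branchSum γ G.hub ∧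
      ∀ c, G.branch c = r → pairing γ (G.base c) + pairing γ (G.base b) ≤ 0 := by
  have hadd := h.pairing_hub_add_le b hb
  obtain ⟨r, hr⟩ : U.Nonempty := by
    by_contra hU
    rw [Finset.not_nonempty_iff_eq_empty.1 hU, Finset.sum_empty] at hadd
    linarith
  have hU : U = {r} := by
    refine Finset.eq_singleton_iff_unique_mem.2 ⟨hr, fun i hi => ?_⟩
    by_contra hir
    have hle := h.legAntitone.sum_branchSum_le_outerSum (s := {i, r}) fun hmem => by
      obtain hhub | hhub : G.hub = i ∨ G.hub = r := by simpa using hmem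
      exacts [h.hub_notMem (hhub ▸ hi), h.hub_notMem (hhub ▸ hr)]
    rw [Finset.sum_pair hir, h.branchSum_eq i hi, h.branchSum_eq r hr] at hle
    have hopp : opposite γ b = outerSum γ := if_pos hb
    have hentry := hb ▸ h.legAntitone.entry_le_branchSum b
    linarith [h.legAntitone.pairing_base_le b, h.legAntitone.entry_nonneg b 1]
  subst hU
  refine ⟨r, fun hr' => h.hub_notMem (hr' ▸ hr), h.branchSum_eq r hr, fun c hc => ?_⟩
  subst hc
  rw [Finset.sum_singleton] at hadd
  linarith [h.pairing_le c hr]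

/-- The shape of `γ` after the reflection at a hub vertex: only branches other than the hub and
`r`, of total sum at most that of the hub, can still pair positively. -/
structure NearlyFundamental (r : ι) (γ : G.Vertex → ℤ) : Prop where
  legAntitone : LegAntitone γ
  legSorted : LegSorted γ
  ne_hub : r ≠ G.hub
  outerSum_le : outerSum γ ≤ branchSum γ r + branchSum γ G.hub
  pairing_nonpos : ∀ b, G.branch b = G.hub ∨ G.branch b = r → pairing γ (G.base b) ≤ 0
  pairing_add_nonpos : ∀ b c, G.branch b = G.hub → G.branch c ≠ G.hub → G.branch c ≠ r →
    pairing γ (G.base b) + pairing γ (G.base c) ≤ 0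

theorem BaseMove.pairing_self_add_nonpos (hmove : BaseMove γ b γ') (h : LegAntitone γ)
    (hb : G.branch b = G.hub) (hpair : 0 ≤ pairing γ (G.base b)) (hr : r ≠ G.hub)
    (hsum : branchSum γ G.hub ≤ branchSum γ r) (hc : G.branch c ≠ G.hub) (hcr : G.branch c ≠ r)
    (hle : pairing γ (G.base c) ≤ 0) :
    pairing γ' (G.base b) + pairing γ' (G.base c) ≤ 0 := by
  have hself := hmove.pairing_self
  obtain hdrop | hdrop := hmove.drop_self
  · have hpairc := hmove.pairing_le_of_branch_ne (c := c) (hb ▸ hc)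
    rw [if_pos (by tauto)] at hpairc
    linarith
  · have hsum' := h.sum_branchSum_le_outerSum (s := {r, G.branch c}) (by simp [hr.symm, hc.symm])
    rw [Finset.sum_pair hcr.symm] at hsum'
    have hc' : branchSum γ' (G.branch c) = branchSum γ (G.branch c) := by
      simp [hmove.branchSum_eq, hb, hc.symm]
    have hhub : branchSum γ' G.hub = branchSum γ G.hub - pairing γ (G.base b) := by
      simp [hmove.branchSum_eq, hb]
    have hentry := hb ▸ h.entry_le_branchSum b
    have hoppb : opposite γ b = outerSum γ := if_pos hb
    have hoppc : opposite γ' c = branchSum γ' G.hub := if_neg hc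
    linarith [hmove.legAntitone.pairing_base_le c, hmove.legAntitone.entry_le_branchSum c,
      hmove.legAntitone.entry_nonneg c 1, pairing_base γ b, h.intra_nonneg b, h.pairing_base_le b]

theorem exists_nearlyFundamental (h : LegAntitone γ) (hsorted : LegSorted γ)
    (hb : G.branch b = G.hub) (hpos : 0 < pairing γ (G.base b)) (hr : r ≠ G.hub)
    (hsum : branchSum γ r = branchSum γ G.hub)
    (hbranch : ∀ c, G.branch c = r → pairing γ (G.base c) + pairing γ (G.base b) ≤ 0)
    (hle : ∀ c, G.branch c ≠ G.hub → pairing γ (G.base c) ≤ 0) :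
    ∃ γ', Reaches γ γ' ∧ NearlyFundamental r γ' := by
  have hopp : opposite γ b = outerSum γ := if_pos hb
  have hr_le : branchSum γ r ≤ outerSum γ := by
    simpa using h.sum_branchSum_le_outerSum (s := {r}) (by simp [hr.symm])
  have hentry := h.entry_le_branchSum b
  have hpair := h.pairing_base_le b
  obtain ⟨γ', hmove⟩ := exists_baseMove h hsorted hpos (by linarith [hb ▸ hsum])
  have houter : outerSum γ' = outerSum γ := by simp [hmove.outerSum_eq, hb]
  have hr' : branchSum γ' r = branchSum γ r := by simp [hmove.branchSum_eq, hb, hr.symm]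
  have hhub : branchSum γ' G.hub = branchSum γ G.hub - pairing γ (G.base b) := by
    simp [hmove.branchSum_eq, hb]
  have hother : ∀ c, G.branch c ≠ G.hub →
      pairing γ' (G.base c) ≤ pairing γ (G.base c) + pairing γ (G.base b) := fun c hc => by
    simpa [hb, hc] using hmove.pairing_le_of_branch_ne (c := c) (hb ▸ hc)
  rw [hb] at hentry
  refine ⟨γ', hmove.reaches, hmove.legAntitone, hmove.legSorted, hr, ?_, ?_, ?_⟩
  · linarith [h.entry_nonneg b 1]
  · rintro l (hl | rfl)
    · obtain rfl | hlb := eq_or_ne l b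
      · exact hmove.pairing_self_nonpos
      · linarith [hmove.pairing_le_of_branch_eq h (hl.trans hb.symm) hlb, hb ▸ hsum]
    · exact (hother l hr).trans (hbranch l rfl)
  · intro l c hl hc hcr
    have hcpair := (hother c hc).trans (add_le_of_nonpos_left (hle c hc))
    obtain rfl | hlb := eq_or_ne l b
    · exact hmove.pairing_self_add_nonpos h hb hpos.le hr hsum.ge hc hcr (hle c hc)
    · linarith [hmove.pairing_le_of_branch_eq h (hl.trans hb.symm) hlb, hb ▸ hsum]

namespace NearlyFundamental

theorem sum_branchSum_le (h : NearlyFundamental r γ) {s : Finset ι} (hhub : G.hub ∉ s)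
    (hr : r ∉ s) : ∑ i ∈ s, branchSum γ i ≤ branchSum γ G.hub := by
  have hle := h.legAntitone.sum_branchSum_le_outerSum (s := insert r s)
    (by simp [hhub, h.ne_hub.symm])
  rw [Finset.sum_insert hr] at hle
  linarith [h.outerSum_le]

theorem branchSum_le (h : NearlyFundamental r γ) (hb : G.branch b ≠ G.hub)
    (hbr : G.branch b ≠ r) : branchSum γ (G.branch b) ≤ branchSum γ G.hub := by
  simpa using h.sum_branchSum_le (s := {G.branch b}) (by simp [hb.symm]) (by simp [hbr.symm])

theorem pairing_nonpos_of_pairing_pos (h : NearlyFundamental r γ) (hb : G.branch b ≠ G.hub)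
    (hbr : G.branch b ≠ r) (hpos : 0 < pairing γ (G.base b)) (hbc : G.branch c ≠ G.branch b) :
    pairing γ (G.base c) ≤ 0 := by
  by_cases hc : G.branch c = G.hub ∨ G.branch c = r
  · exact h.pairing_nonpos c hc
  obtain ⟨hc, hcr⟩ := not_or.1 hc
  have hsum := h.sum_branchSum_le (s := {G.branch c, G.branch b}) (by simp [hb.symm, Ne.symm hc])
    (by simp [hbr.symm, Ne.symm hcr])
  rw [Finset.sum_pair hbc] at hsum
  have hle : ∀ d, G.branch d ≠ G.hub →
      pairing γ (G.base d) ≤ 2 * branchSum γ (G.branch d) - branchSum γ G.hub := fun d hd => by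
    have hopp : opposite γ d = branchSum γ G.hub := if_neg hd
    linarith [h.legAntitone.pairing_base_le d, h.legAntitone.entry_le_branchSum d,
      h.legAntitone.entry_nonneg d 1]
  linarith [hle b hb, hle c hc]

theorem exists_isFundamental_of_pairing_pos (h : NearlyFundamental r γ)
    (hb : G.branch b ≠ G.hub) (hbr : G.branch b ≠ r) (hpos : 0 < pairing γ (G.base b)) :
    ∃ γ', Reaches γ γ' ∧ IsFundamental γ' := by
  have hopp : opposite γ b = branchSum γ G.hub := if_neg hb
  have hsum := h.branchSum_le hb hbr
  obtain ⟨γ', hmove⟩ := exists_baseMove h.legAntitone h.legSorted hpos (hopp ▸ hsum)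
  have hbase : ∀ c, pairing γ' (G.base c) ≤ 0 := fun c => by
    by_cases hcb : G.branch c = G.branch b
    · obtain rfl | hne := eq_or_ne c b
      · exact hmove.pairing_self_nonpos
      · linarith [hmove.pairing_le_of_branch_eq h.legAntitone hcb hne]
    · refine (hmove.pairing_le_of_branch_ne hcb).trans ?_
      split_ifs with hc
      · exact h.pairing_add_nonpos c b (hc.2 hb) hb hbr
      · linarith [h.pairing_nonpos_of_pairing_pos hb hbr hpos hcb]
  have hhub : 0 < branchSum γ' G.hub := by
    rw [hmove.branchSum_eq, if_neg hb]
    linarith [h.legAntitone.pairing_base_le b, h.legAntitone.entry_le_branchSum b,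
      h.legAntitone.entry_nonneg b 1]
  have hne : γ' ≠ 0 := by
    rintro rfl
    simp [branchSum, entry] at hhub
  exact ⟨γ', hmove.reaches, hmove.legAntitone.isFundamental hmove.legSorted hne hbase
    fun h0 => absurd h0 hhub.ne'⟩

theorem exists_isFundamental (h : NearlyFundamental r γ) (hne : γ ≠ 0) :
    ∃ γ', Reaches γ γ' ∧ IsFundamental γ' := by
  by_cases hle : ∀ b, pairing γ (G.base b) ≤ 0
  · refine ⟨γ, .refl, h.legAntitone.isFundamental h.legSorted hne hle
      fun hhub => ⟨r, fun b hb => ?_⟩⟩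
    refine le_antisymm ?_ (h.legAntitone.entry_nonneg b 0)
    by_cases hb' : G.branch b = G.hub
    · exact hhub ▸ hb' ▸ h.legAntitone.entry_le_branchSum b
    · exact hhub ▸ (h.legAntitone.entry_le_branchSum b).trans (h.branchSum_le hb' hb)
  push Not at hle
  obtain ⟨b, hpos⟩ := hle
  exact h.exists_isFundamental_of_pairing_pos
    (fun hb => hpos.not_ge (h.pairing_nonpos b (.inl hb)))
    (fun hb => hpos.not_ge (h.pairing_nonpos b (.inr hb))) hpos

end NearlyFundamental

theorem QuasiFundamental.exists_isFundamental (h : QuasiFundamental U a γ) :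
    ∃ γ', Reaches γ γ' ∧ IsFundamental γ' := by
  obtain ⟨V, γ₁, hreach, h₁, hle⟩ := h.exists_outer_pairing_nonpos
  by_cases hhub : ∀ b, G.branch b = G.hub → pairing γ₁ (G.base b) ≤ 0
  · have hne : γ₁ ≠ 0 := by
      rintro rfl
      simpa [branchSum, entry] using h₁.branchSum_hub_pos
    exact ⟨γ₁, hreach, h₁.legAntitone.isFundamental h₁.legSorted hne
      (fun b => if hb : G.branch b = G.hub then hhub b hb else hle b hb)
      fun h0 => absurd h0 h₁.branchSum_hub_pos.ne'⟩
  push Not at hhub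
  obtain ⟨b, hb, hpos⟩ := hhub
  obtain ⟨r, hr, hsum, hbranch⟩ := h₁.exists_branch_of_hub_pairing_pos hb hpos
  obtain ⟨γ₂, hreach₂, h₂⟩ :=
    exists_nearlyFundamental h₁.legAntitone h₁.legSorted hb hpos hr hsum hbranch hle
  have hne : γ₂ ≠ 0 := by
    rintro rfl
    simp [hreach₂.eq_zero, pairing] at hpos
  obtain ⟨γ', hreach', hγ'⟩ := h₂.exists_isFundamental hne
  exact ⟨γ', (hreach.trans hreach₂).trans hreach', hγ'⟩

end Descent

end HubGraph

/-! ### The quiver as a hub graph -/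

section Quiver

variable (S : Setup)

theorem bform_eq_sum_mul (β δ : V S → ℤ) :
    bform S β δ = ∑ a, δ a * (2 * β a - ∑ b, ((arr S a b + arr S b a : ℕ) : ℤ) * β b) := by
  have hcomm : ∑ a, ∑ b, (arr S a b : ℤ) * β a * δ b = ∑ a, ∑ b, (arr S b a : ℤ) * β b * δ a :=
    Finset.sum_comm
  rw [bform, eform, eform, hcomm, sub_add_sub_comm, ← Finset.sum_add_distrib,
    ← Finset.sum_add_distrib, ← Finset.sum_sub_distrib]
  refine Finset.sum_congr rfl fun a _ => ?_
  rw [← Finset.sum_add_distrib, mul_sub, Finset.mul_sum]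
  push_cast
  congr 1
  · ring
  · exact Finset.sum_congr rfl fun b _ => by ring

theorem bform_eps (β : V S → ℤ) (a : V S) :
    bform S β (eps S a) = 2 * β a - ∑ b, ((arr S a b + arr S b a : ℕ) : ℤ) * β b := by
  simp [bform_eq_sum_mul, eps]

theorem bform_eq_sum_mul_bform_eps (β δ : V S → ℤ) :
    bform S β δ = ∑ a, δ a * bform S β (eps S a) := by
  simp only [bform_eps, bform_eq_sum_mul S β δ]

theorem bform_epsJ (β : V S → ℤ) (I : ∀ i : Fin (S.p + 1), Fin (S.m i)) :
    bform S β (epsJ S I) = ∑ i : {i // Iirr S i}, bform S β (eps S (vI S i (I i.1))) := by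
  simp only [bform_eq_sum_mul_bform_eps S β (epsJ S I), Fintype.sum_sum_type, Fintype.sum_sigma,
    epsJ, ← Fin.ext_iff, ite_mul, one_mul, zero_mul, Finset.sum_ite_eq', Finset.mem_univ, if_true,
    Finset.sum_const_zero, add_zero, vI]

/-- The points `i ∈ I_reg` for which the vertex `[i,1,1]` exists. -/
abbrev RegBase := {i : Fin (S.p + 1) // ¬Iirr S i ∧ 1 < S.e i ⟨0, S.hm i⟩}

/-- `Q` as a hub graph with hub `0`. The vertices `[i,1,1]` with `i ∈ I_reg` are treated as base
vertices: each is a branch of its own, and its leg consists of the vertices `[i,1,k]` with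
`1 < k`. -/
def hubGraph : HubGraph (Vb S ⊕ RegBase S) ({i // Iirr S i} ⊕ RegBase S) where
  branch := Sum.map Sigma.fst id
  hub := Sum.inl (i0 S)
  mult
    | .inl a, .inl b =>
        if a.1 = b.1 then (S.q a.1.1 a.2 - S.q b.1.1 b.2).natDegree - 2 else 0
    | _, _ => 0
  len
    | .inl a => S.e a.1.1 a.2 - 1
    | .inr i => S.e i.1 ⟨0, S.hm i.1⟩ - 2
  mult_self := by rintro (_ | _) <;> simp
  mult_comm := by
    rintro (a | i) (b | k)
    · dsimp only
      rw [natDegree_sub]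
      simp only [eq_comm]
    all_goals rfl
  mult_eq_zero := by
    rintro (a | i) (b | k) h
    · exact if_neg fun hab => h (congrArg Sum.inl hab)
    all_goals rfl
  mult_ultra := by
    rintro (a | i) (b | k) (c | l) hbc h hpos
    · obtain hbc : b.1 = c.1 := Sum.inl_injective hbc
      dsimp only at h hpos ⊢
      rw [if_pos hbc] at h
      obtain hba : b.1 = a.1 := by
        by_contra hba
        simp [hba] at hpos
      rw [if_pos hba] at hpos
      rw [if_pos (hba ▸ hbc)]
      have hle := natDegree_sub_le (S.q b.1.1 b.2 - S.q c.1.1 c.2) (S.q a.1.1 a.2 - S.q c.1.1 c.2)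
      rw [sub_sub_sub_cancel_right] at hle
      lia
    all_goals first | exact absurd hpos (lt_irrefl 0) | exact absurd hbc Sum.inl_ne_inr

/-- The vertex of `Q` corresponding to a vertex of `hubGraph S`. -/
def vertexMap : (hubGraph S).Vertex → V S
  | ⟨.inl a, ⟨0, _⟩⟩ => Sum.inl a
  | ⟨.inl a, ⟨k + 1, hk⟩⟩ => Sum.inr ⟨a.1.1, a.2, k, Nat.lt_of_succ_lt_succ hk⟩
  | ⟨.inr i, k⟩ =>
      Sum.inr ⟨i.1, ⟨0, S.hm i.1⟩, k, by
        have hk : (k : ℕ) < S.e i.1 ⟨0, S.hm i.1⟩ - 2 + 1 := k.isLt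
        have := i.2.2
        lia⟩

theorem vertexMap_injective : Function.Injective (vertexMap S) := by
  rintro ⟨⟨⟨i, hi⟩, j⟩ | ⟨i, hi, he⟩, _ | k, hk⟩ ⟨⟨⟨i', hi'⟩, j'⟩ | ⟨i', hi', he'⟩, _ | k', hk'⟩ h
  all_goals
    first | (cases h; first | rfl | contradiction) | cases h

theorem vertexMap_surjective : Function.Surjective (vertexMap S) := by
  rintro (a | ⟨i, j, κ⟩)
  · exact ⟨⟨.inl a, 0⟩, rfl⟩
  by_cases hi : Iirr S i
  · exact ⟨⟨.inl ⟨⟨i, hi⟩, j⟩, κ.succ⟩, rfl⟩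
  · obtain rfl : j = ⟨0, S.hm i⟩ := Fin.ext (by have := j.isLt; unfold Iirr at hi; lia)
    have hκ := κ.isLt
    have hlt : (κ : ℕ) < S.e i ⟨0, S.hm i⟩ - 2 + 1 := by lia
    exact ⟨⟨.inr ⟨i, hi, by lia⟩, κ, hlt⟩, rfl⟩

theorem vb_eq_iff {a b : Vb S} : a = b ↔ a.1.1 = b.1.1 ∧ (a.2 : ℕ) = b.2 := by
  obtain ⟨⟨i, hi⟩, j⟩ := a
  obtain ⟨⟨i', hi'⟩, j'⟩ := b
  constructor
  · rintro ⟨⟩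
    exact ⟨rfl, rfl⟩
  · rintro ⟨hii', hj⟩
    obtain rfl : i = i' := hii'
    obtain rfl := Fin.ext hj
    rfl

theorem arr_inl_add_arr_inl (a b : Vb S) :
    arr S (Sum.inl a) (Sum.inl b) + arr S (Sum.inl b) (Sum.inl a) =
      (if a.1 = b.1 then (S.q a.1.1 a.2 - S.q b.1.1 b.2).natDegree - 2 else 0) +
        if a.1 = i0 S ↔ b.1 ≠ i0 S then 1 else 0 := by
  obtain ⟨⟨i, hi⟩, j⟩ := a
  obtain ⟨⟨i', hi'⟩, j'⟩ := b
  obtain rfl | hne := eq_or_ne i i'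
  · have hdegree : (S.q i j - S.q i j').natDegree = (S.q i j' - S.q i j).natDegree := natDegree_sub
    obtain h | rfl | h := lt_trichotomy j j'
    · simp [arr, dcnt, i0, h, h.not_gt]
    · simp [arr, i0]
    · simp [arr, dcnt, i0, h, h.not_gt, hdegree]
  · simp only [arr, i0, Subtype.mk.injEq, hne, hne.symm, dif_neg, if_false, not_false_eq_true]
    grind

theorem arr_add_arr (x y : (hubGraph S).Vertex) :
    arr S (vertexMap S x) (vertexMap S y) + arr S (vertexMap S y) (vertexMap S x) =
      (hubGraph S).adj x y := by
  obtain ⟨a | ⟨i, hi, he⟩, _ | k, hk⟩ := x <;>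
    obtain ⟨b | ⟨i', hi', he'⟩, _ | k', hk'⟩ := y
  case inl.zero.inl.zero =>
    refine (arr_inl_add_arr_inl S a b).trans ?_
    simp [HubGraph.adj, hubGraph]
  all_goals
    simp only [vertexMap, arr, hubGraph, HubGraph.adj, i0, Sum.map, Sum.inl.injEq, vb_eq_iff]
    grind

/-- The identification of the vertices of `hubGraph S` with those of `Q`. -/
def vertexEquiv : (hubGraph S).Vertex ≃ V S :=
  Equiv.ofBijective (vertexMap S) ⟨vertexMap_injective S, vertexMap_surjective S⟩

variable {S}

theorem pairing_comp_vertexEquiv (β : V S → ℤ) (x : (hubGraph S).Vertex) :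
    HubGraph.pairing (β ∘ vertexEquiv S) x = bform S β (eps S (vertexEquiv S x)) := by
  rw [bform_eps, ← (vertexEquiv S).sum_comp, HubGraph.pairing]
  exact congrArg _ (Finset.sum_congr rfl fun y _ => by rw [← arr_add_arr]; rfl)

theorem reflect_comp_vertexEquiv (β : V S → ℤ) (x : (hubGraph S).Vertex) :
    HubGraph.reflect x (β ∘ vertexEquiv S) = refl1 S (vertexEquiv S x) β ∘ vertexEquiv S := by
  ext y
  simp [HubGraph.reflect, refl1, pairing_comp_vertexEquiv, eps, Pi.single_apply]

theorem exists_reflList_of_reaches {γ γ' : (hubGraph S).Vertex → ℤ}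
    (h : HubGraph.Reaches γ γ') :
    ∃ l, γ ∘ (vertexEquiv S).symm = reflList S l (γ' ∘ (vertexEquiv S).symm) := by
  induction h using Relation.ReflTransGen.head_induction_on with
  | refl => exact ⟨[], rfl⟩
  | @head γ γ₁ hstep _ ih =>
    obtain ⟨x, rfl⟩ := hstep
    obtain ⟨l, hl⟩ := ih
    refine ⟨vertexEquiv S x :: l, ?_⟩
    rw [reflList, List.foldr_cons, ← reflList, ← hl, ← (Equiv.comp_symm_eq _ _ _).2
      (reflect_comp_vertexEquiv _ x), Function.comp_assoc, Equiv.symm_comp_self, Function.comp_id,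
      HubGraph.reflect_reflect]

theorem fund_of_isFundamental {γ : (hubGraph S).Vertex → ℤ} (h : HubGraph.IsFundamental γ) :
    fund S (γ ∘ (vertexEquiv S).symm) := by
  have hcomp : (γ ∘ (vertexEquiv S).symm) ∘ vertexEquiv S = γ := by
    rw [Function.comp_assoc, Equiv.symm_comp_self, Function.comp_id]
  refine ⟨fun h0 => h.ne_zero ?_, fun a => h.nonneg _, fun a ha b hb => ?_, fun a => ?_⟩
  · rw [← hcomp, h0]
    rfl
  · rw [← (vertexEquiv S).apply_symm_apply a, ← (vertexEquiv S).apply_symm_apply b]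
    refine (h.linked _ _ ha hb).lift (vertexEquiv S) fun x y ⟨hxy, hx, hy⟩ => ⟨?_, ?_, ?_⟩
    · exact (arr_add_arr S x y).symm ▸ hxy
    · simpa [supp] using hx
    · simpa [supp] using hy
  · rw [← (vertexEquiv S).apply_symm_apply a, ← pairing_comp_vertexEquiv, hcomp]
    exact h.pairing_nonpos _

theorem branchSum_comp_vertexEquiv (β : V S → ℤ) (i : {i // Iirr S i}) :
    HubGraph.branchSum (β ∘ vertexEquiv S) (Sum.inl i) = ∑ j, β (vI S i j) := by
  have hentry : ∀ a : Vb S, HubGraph.entry (β ∘ vertexEquiv S) (Sum.inl a) 0 = β (Sum.inl a) :=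
    fun a => HubGraph.entry_coe _ _ 0
  have hbranch : ∀ a : Vb S, (hubGraph S).branch (Sum.inl a) = Sum.inl i ↔ a.1 = i :=
    fun a => Sum.inl_injective.eq_iff
  have hregBase : ∀ r : RegBase S, (hubGraph S).branch (Sum.inr r) ≠ Sum.inl i :=
    fun _ => Sum.inr_ne_inl
  simp only [HubGraph.branchSum, Finset.sum_filter, Fintype.sum_sum_type, hbranch, hregBase,
    if_false, Finset.sum_const_zero, add_zero]
  rw [Fintype.sum_sigma, Fintype.sum_eq_single i fun i' hi' =>
    Finset.sum_eq_zero fun j _ => if_neg hi']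
  exact Finset.sum_congr rfl fun j _ => (if_pos rfl).trans (hentry _)

theorem branchSum_eq_of_inL {β : V S → ℤ} (hL : inL S β) (i : {i // Iirr S i}) :
    HubGraph.branchSum (β ∘ vertexEquiv S) (Sum.inl i) =
      HubGraph.branchSum (β ∘ vertexEquiv S) (hubGraph S).hub := by
  refine (branchSum_comp_vertexEquiv β i).trans
    (Eq.trans ?_ (branchSum_comp_vertexEquiv β (i0 S)).symm)
  by_cases hi : i = i0 S
  · rw [hi]
  · exact (hL i fun h => hi (Subtype.ext h)).symm

theorem legSorted_comp_vertexEquiv {β : V S → ℤ}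
    (hleg : ∀ r : Vr S, bform S β (eps S (Sum.inr r)) ≤ 0) :
    HubGraph.LegSorted (β ∘ vertexEquiv S) := by
  rintro (a | i) k
  all_goals
    rw [pairing_comp_vertexEquiv]
    exact hleg _

theorem pairing_regBase_nonpos {β : V S → ℤ}
    (hleg : ∀ r : Vr S, bform S β (eps S (Sum.inr r)) ≤ 0) (i : RegBase S) :
    HubGraph.pairing (β ∘ vertexEquiv S) ((hubGraph S).base (Sum.inr i)) ≤ 0 := by
  rw [pairing_comp_vertexEquiv]
  exact hleg _

theorem branchSum_hub_pos {β : V S → ℤ} (hL : inL S β) (h0 : ∀ a, 0 ≤ β a) (hne : β ≠ 0)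
    (hleg : ∀ r : Vr S, bform S β (eps S (Sum.inr r)) ≤ 0) :
    0 < HubGraph.branchSum (β ∘ vertexEquiv S) (hubGraph S).hub := by
  have hanti := (legSorted_comp_vertexEquiv hleg).legAntitone fun x => h0 (vertexEquiv S x)
  by_contra hhub
  have hentry : ∀ b, HubGraph.entry (β ∘ vertexEquiv S) b 0 ≤ 0 := by
    rintro (a | i)
    · refine (hanti.entry_le_branchSum _).trans ?_
      exact (branchSum_eq_of_inL hL a.1).trans_le (not_lt.1 hhub)
    · have hopp : HubGraph.opposite (β ∘ vertexEquiv S) (Sum.inr i) =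
          HubGraph.branchSum (β ∘ vertexEquiv S) (hubGraph S).hub := if_neg Sum.inr_ne_inl
      have hintra : HubGraph.intra (β ∘ vertexEquiv S) (Sum.inr i) = 0 :=
        Finset.sum_eq_zero fun c _ => by
          rw [show (hubGraph S).mult (Sum.inr i) c = 0 from rfl, Nat.cast_zero, zero_mul]
      linarith [pairing_regBase_nonpos hleg i,
        HubGraph.pairing_base (β ∘ vertexEquiv S) (Sum.inr i), hanti.drop_nonneg (Sum.inr i) 0]
  refine hne (funext fun a => (h0 a).antisymm' ?_)
  obtain ⟨⟨b, k⟩, rfl⟩ := (vertexEquiv S).surjective a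
  exact (HubGraph.entry_coe _ b k).symm.trans_le ((hanti b k.val.zero_le).trans (hentry b))

theorem sum_bform_eps_nonpos {β : V S → ℤ} (hJ : ∀ I, bform S β (epsJ S I) ≤ 0)
    (I : ∀ i : {i // Iirr S i}, Fin (S.m i.1)) :
    ∑ i, bform S β (eps S (vI S i (I i))) ≤ 0 := by
  have h := hJ fun i => if hi : Iirr S i then I ⟨i, hi⟩ else ⟨0, S.hm i⟩
  rw [bform_epsJ] at h
  exact (Finset.sum_congr rfl fun i _ => by rw [dif_pos i.2]).trans_le h

theorem exists_quasiFundamental {β : V S → ℤ} (hL : inL S β) (h0 : ∀ a, 0 ≤ β a) (hne : β ≠ 0)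
    (hJ : ∀ I, bform S β (epsJ S I) ≤ 0)
    (hleg : ∀ r : Vr S, bform S β (eps S (Sum.inr r)) ≤ 0) :
    ∃ U a, HubGraph.QuasiFundamental U a (β ∘ vertexEquiv S) := by
  have hmax : ∀ i : {i // Iirr S i}, ∃ j, ∀ j',
      bform S β (eps S (vI S i j')) ≤ bform S β (eps S (vI S i j)) := fun i =>
    have : Nonempty (Fin (S.m i.1)) := ⟨⟨0, S.hm i.1⟩⟩
    Finite.exists_max _
  choose I hI using hmax
  have hpair : ∀ a : Vb S, HubGraph.pairing (β ∘ vertexEquiv S) ((hubGraph S).base (Sum.inl a)) =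
      bform S β (eps S (vI S a.1 a.2)) := fun a => pairing_comp_vertexEquiv _ _
  have hsorted := legSorted_comp_vertexEquiv hleg
  refine ⟨(Finset.univ.erase (i0 S)).map Function.Embedding.inl,
    Sum.elim (fun i => bform S β (eps S (vI S i (I i)))) 0,
    hsorted.legAntitone fun x => h0 (vertexEquiv S x), hsorted, ?_,
    branchSum_hub_pos hL h0 hne hleg, ?_, ?_, ?_, ?_⟩
  · simp [hubGraph]
  · intro i hi
    obtain ⟨i, -, rfl⟩ := Finset.mem_map.1 hi
    exact branchSum_eq_of_inL hL i
  · rintro (⟨i, j⟩ | i) hhub hU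
    · exact absurd (Finset.mem_map_of_mem Function.Embedding.inl (Finset.mem_erase.2
        ⟨fun hi => hhub (congrArg Sum.inl hi), Finset.mem_univ i⟩)) hU
    · exact pairing_regBase_nonpos hleg i
  · rintro (⟨i, j⟩ | i) hU
    · exact (hpair _).trans_le (hI i j)
    · simp [hubGraph] at hU
  · rintro (⟨i, j⟩ | i) hhub
    · obtain rfl : i = i0 S := Sum.inl_injective hhub
      have hsum := sum_bform_eps_nonpos hJ (Function.update I (i0 S) j)
      rw [← Finset.add_sum_erase _ _ (Finset.mem_univ (i0 S)), Function.update_self] at hsum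
      rw [hpair, Finset.sum_map]
      refine (congrArg _ (Finset.sum_congr rfl fun i hi => ?_)).trans_le hsum
      rw [Function.update_of_ne (Finset.ne_of_mem_erase hi)]
      rfl
    · exact absurd hhub Sum.inr_ne_inl

end Quiver

theorem statement11_general (S : Setup) (β : V S → ℤ) (hL : inL S β) (h0 : ∀ a, 0 ≤ β a)
    (hne : β ≠ 0) (hJ : ∀ I, bform S β (epsJ S I) ≤ 0)
    (hleg : ∀ r : Vr S, bform S β (eps S (Sum.inr r)) ≤ 0) : isImagRoot S β := by
  obtain ⟨U, a, hβ⟩ := exists_quasiFundamental hL h0 hne hJ hleg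
  obtain ⟨γ, hreach, hγ⟩ := hβ.exists_isFundamental
  obtain ⟨l, hl⟩ := exists_reflList_of_reaches hreach
  refine ⟨l, _, Or.inl (fund_of_isFundamental hγ), ?_⟩
  rw [← hl, Function.comp_assoc, Equiv.self_comp_symm, Function.comp_id]

/-- If `β ∈ F̃` and `q(β) < 0`, then `β` is a positive root of the quiver `Q`. -/
theorem statement11 (S : Setup) (β : V S → ℤ) (hβ : quasiFund S β)
    (hq : qform S β < 0) : isPosRoot S β := by
  exact ⟨Or.inr (statement11_general S β hβ.1 hβ.2.1 hβ.2.2.1 hβ.2.2.2.1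
    fun ⟨i, j, κ⟩ => hβ.2.2.2.2.1 i j κ), hβ.2.1⟩

end

end DS
end
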